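/- Let (s,u) be a solution of problem (P) with initial data (s₀,φ) ∈ W, and let T_m denote its maximal existence time. If T_m < ∞, then: sup_{t∈(T_m/2,T_m)} (T_m − t)^{1/(2(p−1))} u(t,0) < ∞; for every δ ∈ (0,s₀), sup_{t∈(T_m/2,T_m)} ‖u(t)‖_{L^∞(δ,s(t))} < ∞; and lim_{t↗T_m} s(t) < ∞. -/

import Mathlib

open Set MeasureTheory Filter Topology Real
open scoped ENNReal

noncomputable section

/-- `(s₀, φ)` belongs to the class `W`: `s₀ ∈ (0,∞)`, `φ` is Lipschitz on `[0,s₀]`,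
not identically zero, nonnegative there, and vanishes at `s₀`. -/
def memW (s₀ : ℝ) (φ : ℝ → ℝ) : Prop :=
  0 < s₀ ∧ (∃ K : NNReal, LipschitzOnWith K φ (Icc 0 s₀)) ∧
    (∃ x ∈ Icc 0 s₀, φ x ≠ 0) ∧ (∀ x ∈ Icc 0 s₀, 0 ≤ φ x) ∧ φ s₀ = 0

/-- `(s,u)` is a solution of the one-phase Stefan problem (P) on `(0,T]` (finite `T`)
with exponent `p` and initial data `(s₀,φ)`. -/
structure IsSolOn (p s₀ : ℝ) (φ : ℝ → ℝ) (T : ℝ) (s : ℝ → ℝ) (u : ℝ → ℝ → ℝ) : Prop where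
  T_pos : 0 < T
  s_cont : ContinuousOn s (Icc 0 T)
  s_diff : ∀ t ∈ Ioc 0 T, DifferentiableAt ℝ s t
  s_deriv_cont : ContinuousOn (deriv s) (Ioc 0 T)
  s_pos : ∀ t ∈ Icc 0 T, 0 < s t
  ut_diff : ∀ t ∈ Ioc 0 T, ∀ x ∈ Ioo 0 (s t), DifferentiableAt ℝ (fun τ => u τ x) t
  ux_diff : ∀ t ∈ Ioc 0 T, ∀ x ∈ Ioo 0 (s t), DifferentiableAt ℝ (u t) x
  uxx_diff : ∀ t ∈ Ioc 0 T, ∀ x ∈ Ioo 0 (s t), DifferentiableAt ℝ (deriv (u t)) x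
  ut_cont : ContinuousOn (fun q : ℝ × ℝ => deriv (fun τ => u τ q.2) q.1)
      {q : ℝ × ℝ | q.1 ∈ Ioc 0 T ∧ q.2 ∈ Ioo 0 (s q.1)}
  uxx_cont : ContinuousOn (fun q : ℝ × ℝ => deriv (deriv (u q.1)) q.2)
      {q : ℝ × ℝ | q.1 ∈ Ioc 0 T ∧ q.2 ∈ Ioo 0 (s q.1)}
  ux_cont : ContinuousOn (fun q : ℝ × ℝ => deriv (u q.1) q.2)
      {q : ℝ × ℝ | q.1 ∈ Ioc 0 T ∧ q.2 ∈ Icc 0 (s q.1)}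
  u_cont : ContinuousOn (fun q : ℝ × ℝ => u q.1 q.2)
      {q : ℝ × ℝ | q.1 ∈ Icc 0 T ∧ q.2 ∈ Icc 0 (s q.1)}
  u_nonneg : ∀ t ∈ Icc 0 T, ∀ x ∈ Icc 0 (s t), 0 ≤ u t x
  heat : ∀ t ∈ Ioc 0 T, ∀ x ∈ Ioo 0 (s t),
      deriv (fun τ => u τ x) t = deriv (deriv (u t)) x
  bc_zero : ∀ t ∈ Ioc 0 T, -deriv (u t) 0 = u t 0 ^ p
  bc_free : ∀ t ∈ Ioc 0 T, u t (s t) = 0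
  stefan : ∀ t ∈ Ioc 0 T, deriv s t = -deriv (u t) (s t)
  init : ∀ x ∈ Icc 0 s₀, u 0 x = φ x
  init_s : s 0 = s₀

/-- `(s,u)` is a global-in-time solution of problem (P). -/
def IsGlobalSol (p s₀ : ℝ) (φ : ℝ → ℝ) (s : ℝ → ℝ) (u : ℝ → ℝ → ℝ) : Prop :=
  ∀ T : ℝ, 0 < T → IsSolOn p s₀ φ T s u

/-- `Tm ∈ (0,∞]` is the maximal existence time of the solution `(s,u)` of (P) with
initial data `(s₀,φ)`: the solution exists on `(0,T]` for every `T < Tm`, and for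
`T > Tm` problem (P) admits no solution on `(0,T]`. -/
def IsMaxSol (p s₀ : ℝ) (φ : ℝ → ℝ) (Tm : ℝ≥0∞) (s : ℝ → ℝ) (u : ℝ → ℝ → ℝ) : Prop :=
  0 < Tm ∧
    (∀ T : ℝ, 0 < T → ENNReal.ofReal T < Tm → IsSolOn p s₀ φ T s u) ∧
    (∀ T : ℝ, Tm < ENNReal.ofReal T → ¬∃ σ v, IsSolOn p s₀ φ T σ v)

/-- The sup norm `‖u(t)‖_{L^∞(0,s(t))}`. -/
def supNorm (s : ℝ → ℝ) (u : ℝ → ℝ → ℝ) (t : ℝ) : ℝ :=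
  sSup (u t '' Ioo 0 (s t))

/-- The `L¹` norm `‖u(t)‖_{L¹(0,s(t))}` of the nonnegative function `u(t,·)`. -/
def L1Norm (s : ℝ → ℝ) (u : ℝ → ℝ → ℝ) (t : ℝ) : ℝ :=
  ∫ x in (0:ℝ)..(s t), u t x

/-- The energy `E(s(t),u(t))`. -/
def energy (p : ℝ) (s : ℝ → ℝ) (u : ℝ → ℝ → ℝ) (t : ℝ) : ℝ :=
  1 / 2 * (∫ x in (0:ℝ)..(s t), (deriv (u t) x) ^ 2) - u t 0 ^ (p + 1) / (p + 1)

/-!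
The energy `1/2 ∫ u_x² - u(t,0)^(p+1) / (p+1)` is dissipated. As `u` has no classical derivatives
up to the boundary beyond `u_x`, this is proved for Steklov averages in time and passed to the
limit. Dissipation makes `-E` dominate `u(t,0)^(p+1)` and double within a time of order
`(-E)^(-2(p-1)/(p+1))`; summing these doubling times gives the blow-up rate. Comparison with
`A (k x² + T - t)^(-1/(2(p-1)))` turns the rate into bounds away from `x = 0`, and comparison with
`K (s(t) - x)` then bounds `s'`, so that the nondecreasing function `s` converges.
-/

/-! ### Calculus on intervals -/

lemma sq_integral_le_mul_integral_sq {f : ℝ → ℝ} {a b : ℝ} (hab : a ≤ b)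
    (hf : IntervalIntegrable f volume a b)
    (hf2 : IntervalIntegrable (fun x => f x ^ 2) volume a b) :
    (∫ x in a..b, f x) ^ 2 ≤ (b - a) * ∫ x in a..b, f x ^ 2 := by
  rcases hab.eq_or_lt with rfl | hlt
  · simp
  set I := ∫ x in a..b, f x with hI
  have expand : ∫ x in a..b, ((b - a) * f x - I) ^ 2 =
      (b - a) * ((b - a) * (∫ x in a..b, f x ^ 2) - I ^ 2) := by
    have pointwise (x : ℝ) : ((b - a) * f x - I) ^ 2 =
        (b - a) ^ 2 * f x ^ 2 - 2 * (b - a) * I * f x + I ^ 2 := by ring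
    simp_rw [pointwise]
    rw [intervalIntegral.integral_add ((hf2.const_mul _).sub (hf.const_mul _))
        intervalIntegrable_const,
      intervalIntegral.integral_sub (hf2.const_mul _) (hf.const_mul _),
      intervalIntegral.integral_const_mul, intervalIntegral.integral_const_mul,
      intervalIntegral.integral_const, ← hI, smul_eq_mul]
    ring
  have nonneg : 0 ≤ ∫ x in a..b, ((b - a) * f x - I) ^ 2 :=
    intervalIntegral.integral_nonneg hab fun x _ => sq_nonneg _
  rw [expand] at nonneg
  linarith [nonneg_of_mul_nonneg_right nonneg (sub_pos.2 hlt)]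

lemma sq_integral_le_mul_integral_sq_of_continuousOn {f : ℝ → ℝ} {a b : ℝ} (hab : a ≤ b)
    (hf : ContinuousOn f (Icc a b)) :
    (∫ x in a..b, f x) ^ 2 ≤ (b - a) * ∫ x in a..b, f x ^ 2 :=
  sq_integral_le_mul_integral_sq hab (hf.intervalIntegrable_of_Icc hab)
    ((hf.pow 2).intervalIntegrable_of_Icc hab)

lemma integral_integral_swap_of_continuousOn {F : ℝ → ℝ → ℝ} {a b c d : ℝ}
    (hF : ContinuousOn ↿F (uIcc a b ×ˢ uIcc c d)) :
    ∫ x in a..b, ∫ y in c..d, F x y = ∫ y in c..d, ∫ x in a..b, F x y :=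
  intervalIntegral_intervalIntegral_swap <|
    (hF.integrableOn_compact (isCompact_uIcc.prod isCompact_uIcc)).mono_set
      (prod_mono uIoc_subset_uIcc uIoc_subset_uIcc)

lemma hasDerivAt_integral_of_continuous_deriv {f f' : ℝ → ℝ → ℝ}
    (hf : Continuous ↿f) (hf' : Continuous ↿f')
    (hderiv : ∀ t x, HasDerivAt (fun τ => f τ x) (f' t x) t) (a b t : ℝ) :
    HasDerivAt (fun τ => ∫ x in a..b, f τ x) (∫ x in a..b, f' t x) t := by
  have hslice (τ : ℝ) : Continuous (f τ) := by fun_prop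
  have hslice' : Continuous (f' t) := by fun_prop
  obtain ⟨C, hC⟩ := ((isCompact_closedBall t 1).prod (isCompact_uIcc (a := a) (b := b)))
    |>.exists_bound_of_continuousOn hf'.continuousOn
  refine (intervalIntegral.hasDerivAt_integral_of_dominated_loc_of_deriv_le (bound := fun _ => C)
    (Metric.closedBall_mem_nhds t one_pos) (.of_forall fun τ => (hslice τ).aestronglyMeasurable)
    ((hslice t).intervalIntegrable _ _) hslice'.aestronglyMeasurable
    (.of_forall fun x hx τ hτ => hC (τ, x) ⟨hτ, uIoc_subset_uIcc hx⟩)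
    intervalIntegrable_const (.of_forall fun x _ τ _ => hderiv τ x)).2

lemma hasDerivAt_integral_moving_endpoint {f f' : ℝ → ℝ → ℝ} {S : ℝ → ℝ} {S' a t : ℝ}
    (hf : Continuous ↿f) (hf' : Continuous ↿f')
    (hderiv : ∀ t x, HasDerivAt (fun τ => f τ x) (f' t x) t) (hS : HasDerivAt S S' t) :
    HasDerivAt (fun τ => ∫ x in a..S τ, f τ x)
      ((∫ x in a..S t, f' t x) + S' * f t (S t)) t := by
  let G (τ b : ℝ) : ℝ := ∫ x in a..b, f τ x
  let D₁ (τ b : ℝ) : ℝ →L[ℝ] ℝ := .toSpanSingleton ℝ (∫ x in a..b, f' τ x)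
  let D₂ (τ b : ℝ) : ℝ →L[ℝ] ℝ := .toSpanSingleton ℝ (f τ b)
  have hG : HasStrictFDerivAt (↿G) ((↿D₁ (t, S t)).coprod (↿D₂ (t, S t))) (t, S t) := by
    refine hasStrictFDerivAt_uncurry_coprod
      (.of_forall fun v =>
        (hasDerivAt_integral_of_continuous_deriv hf hf' hderiv a v.2 v.1).hasFDerivAt)
      (.of_forall fun v => ?_) (Continuous.continuousAt ?_) (Continuous.continuousAt ?_)
    · have hslice : Continuous (f v.1) := by fun_prop
      exact (hslice.integral_hasStrictDerivAt a v.2).hasDerivAt.hasFDerivAt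
    · exact ContinuousLinearMap.toSpanSingletonCLE.continuous.comp
        (intervalIntegral.continuous_parametric_primitive_of_continuous hf')
    · exact ContinuousLinearMap.toSpanSingletonCLE.continuous.comp hf
  have hcurve : HasDerivAt (fun τ => (τ, S τ)) (1, S') t := (hasDerivAt_id t).prodMk hS
  refine (hG.hasFDerivAt.comp_hasDerivAt t hcurve).congr_deriv ?_
  simp [D₁, D₂, Function.HasUncurry.uncurry]

lemma mul_integral_comp_add_mul_unit (f : ℝ → ℝ) (t h : ℝ) :
    h * ∫ θ in (0:ℝ)..1, f (t + θ * h) = ∫ τ in t..(t + h), f τ := by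
  have := intervalIntegral.mul_integral_comp_add_mul (a := 0) (b := 1) (f := f) h t
  simpa only [zero_mul, mul_zero, add_zero, one_mul, mul_one, mul_comm h] using this

lemma deriv_nonpos_of_le_left {g : ℝ → ℝ} {g' a : ℝ} (hg : HasDerivWithinAt g g' (Iic a) a)
    (hmin : ∀ᶠ y in 𝓝[<] a, g a ≤ g y) : g' ≤ 0 := by
  have hslope : Tendsto (slope g a) (𝓝[<] a) (𝓝 g') := by
    simpa [Iic_sdiff_right] using hasDerivWithinAt_iff_tendsto_slope.1 hg
  refine le_of_tendsto hslope ?_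
  filter_upwards [hmin, self_mem_nhdsWithin] with y hy hlt
  rw [slope_def_field]
  exact div_nonpos_of_nonneg_of_nonpos (sub_nonneg.2 hy) (sub_nonpos.2 (le_of_lt hlt))

lemma le_zero_of_tendsto_deriv_of_le_left {f f' : ℝ → ℝ} {a b l : ℝ} (hab : a < b)
    (hf : ContinuousOn f (Icc a b)) (hderiv : ∀ x ∈ Ioo a b, HasDerivAt f (f' x) x)
    (hlim : Tendsto f' (𝓝[<] b) (𝓝 l)) (hmin : ∀ x ∈ Ioo a b, f b ≤ f x) : l ≤ 0 := by
  have hIoo : Ioo a b ∈ 𝓝[<] b := Ioo_mem_nhdsLT hab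
  have hf_left : HasDerivWithinAt f l (Iic b) b := by
    refine hasDerivWithinAt_Iic_of_tendsto_deriv (s := Ioo a b)
      (fun x hx => (hderiv x hx).differentiableAt.differentiableWithinAt)
      ((hf b (right_mem_Icc.2 hab.le)).mono Ioo_subset_Icc_self) hIoo (hlim.congr' ?_)
    filter_upwards [hIoo] with x hx using (hderiv x hx).deriv.symm
  exact deriv_nonpos_of_le_left hf_left (by filter_upwards [hIoo] with x hx using hmin x hx)

lemma deriv_deriv_nonneg_of_isLocalMin {f : ℝ → ℝ} {b : ℝ} (hmin : IsLocalMin f b)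
    (hf : ContinuousAt f b) : 0 ≤ deriv (deriv f) b := by
  by_contra! hneg
  have hmax : IsLocalMax f b := isLocalMax_of_deriv_deriv_neg hneg hmin.deriv_eq_zero hf
  have hconst : f =ᶠ[𝓝 b] fun _ => f b := by
    filter_upwards [hmin, hmax] with x h₁ h₂ using le_antisymm h₂ h₁
  have hzero : deriv f =ᶠ[𝓝 b] fun _ => 0 := by simpa using hconst.deriv
  have : deriv (deriv f) b = 0 := by simpa using hzero.deriv_eq
  exact hneg.ne this

/-! ### Steklov time averages -/

/-- The Steklov average `h⁻¹ ∫_t^{t+h} f(τ, x) dτ` in time. Parametrising the window by `[0, 1]`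
makes it jointly continuous up to `h = 0`, where it is `f t x`. -/
def timeAvg (f : ℝ → ℝ → ℝ) (h t x : ℝ) : ℝ := ∫ θ in (0 : ℝ)..1, f (t + θ * h) x

/-- The forward difference quotient `(f(t + h, x) - f(t, x)) / h` in time. -/
def timeQuot (f : ℝ → ℝ → ℝ) (h t x : ℝ) : ℝ := (f (t + h) x - f t x) / h

@[fun_prop]
lemma continuous_timeAvg {X : Type*} [TopologicalSpace X] {f : ℝ → ℝ → ℝ} {h t x : X → ℝ}
    (hf : Continuous ↿f) (hh : Continuous h) (ht : Continuous t) (hx : Continuous x) :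
    Continuous fun z => timeAvg f (h z) (t z) (x z) := by
  unfold timeAvg
  fun_prop

@[fun_prop]
lemma continuous_timeQuot {X : Type*} [TopologicalSpace X] {f : ℝ → ℝ → ℝ} {t x : X → ℝ} {h : ℝ}
    (hf : Continuous ↿f) (ht : Continuous t) (hx : Continuous x) :
    Continuous fun z => timeQuot f h (t z) (x z) := by
  unfold timeQuot
  fun_prop

lemma timeAvg_zero (f : ℝ → ℝ → ℝ) (t x : ℝ) : timeAvg f 0 t x = f t x := by simp [timeAvg]

lemma timeAvg_eq_integral_div (f : ℝ → ℝ → ℝ) {h : ℝ} (hh : h ≠ 0) (t x : ℝ) :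
    timeAvg f h t x = (∫ τ in t..(t + h), f τ x) / h := by
  rw [← mul_integral_comp_add_mul_unit (fun τ => f τ x), timeAvg, mul_div_cancel_left₀ _ hh]

lemma hasDerivAt_timeAvg {f : ℝ → ℝ → ℝ} (hf : Continuous ↿f) {h : ℝ} (hh : h ≠ 0) (t x : ℝ) :
    HasDerivAt (fun τ => timeAvg f h τ x) (timeQuot f h t x) t := by
  have hslice : Continuous fun τ => f τ x := by fun_prop
  have hprim : (fun τ => timeAvg f h τ x) =
      fun τ => ((∫ r in (0 : ℝ)..(τ + h), f r x) - ∫ r in (0 : ℝ)..τ, f r x) / h := by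
    funext τ
    rw [timeAvg_eq_integral_div f hh, intervalIntegral.integral_interval_sub_left] <;>
      exact hslice.intervalIntegrable _ _
  have hupper : HasDerivAt (fun τ => ∫ r in (0 : ℝ)..(τ + h), f r x) (f (t + h) x) t :=
    HasDerivAt.comp_add_const t h (hslice.integral_hasStrictDerivAt 0 (t + h)).hasDerivAt
  rw [hprim]
  exact (hupper.sub (hslice.integral_hasStrictDerivAt 0 t).hasDerivAt).div_const h

/-! ### The extended problem -/

/-- A solution of (P) on the time interval `[α, β]`, extended to all of `ℝ × ℝ` so that its time
averages make sense: `S` is the free boundary, `w` the temperature and `q` its space derivative.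
The heat equation enters only through its integrated form `conservation`. -/
structure IsExtendedSol (p α β : ℝ) (S : ℝ → ℝ) (w q : ℝ → ℝ → ℝ) : Prop where
  continuous_S : Continuous S
  S_pos : ∀ t, 0 < S t
  monotone_S : Monotone S
  hasDerivAt_S : ∀ t ∈ Ioo α β, HasDerivAt S (-q t (S t)) t
  continuous_w : Continuous ↿w
  continuous_q : Continuous ↿q
  hasDerivAt_w : ∀ t, ∀ x ∈ Ioo 0 (S t), HasDerivAt (w t) (q t x) x
  conservation : ∀ t₁ ∈ Icc α β, ∀ t₂ ∈ Icc α β, t₁ ≤ t₂ →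
    ∀ x ∈ Ioo 0 (S t₁), ∀ y ∈ Ioo 0 (S t₁),
      ∫ ξ in x..y, (w t₂ ξ - w t₁ ξ) = ∫ τ in t₁..t₂, (q τ y - q τ x)
  flux_zero : ∀ t, -q t 0 = w t 0 ^ p
  w_free : ∀ t, w t (S t) = 0
  w_nonneg : ∀ t x, 0 ≤ w t x

namespace IsExtendedSol

variable {p α β : ℝ} {S : ℝ → ℝ} {w q : ℝ → ℝ → ℝ}

lemma q_free_nonpos (H : IsExtendedSol p α β S w q) (t : ℝ) : q t (S t) ≤ 0 := by
  have hw : Continuous (w t) := by have := H.continuous_w; fun_prop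
  have hq : Continuous (q t) := by have := H.continuous_q; fun_prop
  exact le_zero_of_tendsto_deriv_of_le_left (H.S_pos t) hw.continuousOn (H.hasDerivAt_w t)
    (hq.tendsto (S t) |>.mono_left nhdsWithin_le_nhds)
    fun x _ => (H.w_free t).trans_le (H.w_nonneg t x)

lemma integral_q (H : IsExtendedSol p α β S w q) {t x y : ℝ} (hx : 0 ≤ x) (hxy : x ≤ y)
    (hy : y ≤ S t) : ∫ ξ in x..y, q t ξ = w t y - w t x := by
  have hw : Continuous (w t) := by have := H.continuous_w; fun_prop
  have hq : Continuous (q t) := by have := H.continuous_q; fun_prop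
  exact intervalIntegral.integral_eq_sub_of_hasDerivAt_of_le hxy hw.continuousOn
    (fun ξ hξ => H.hasDerivAt_w t ξ ⟨hx.trans_lt hξ.1, hξ.2.trans_le hy⟩)
    (hq.intervalIntegrable _ _)

lemma integral_w_sub_eq (H : IsExtendedSol p α β S w q) {t₁ t₂ x : ℝ} (ht₁ : t₁ ∈ Icc α β)
    (ht₂ : t₂ ∈ Icc α β) (ht : t₁ ≤ t₂) (hx : x ∈ Icc 0 (S t₁)) :
    ∫ ξ in (0 : ℝ)..x, (w t₂ ξ - w t₁ ξ) = ∫ τ in t₁..t₂, (q τ x - q τ 0) := by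
  have hw := H.continuous_w
  have hq := H.continuous_q
  have int_w (a b : ℝ) : IntervalIntegrable (fun ξ => w t₂ ξ - w t₁ ξ) volume a b :=
    Continuous.intervalIntegrable (by fun_prop) _ _
  have int_q (a : ℝ) : IntervalIntegrable (fun τ => q τ a) volume t₁ t₂ :=
    Continuous.intervalIntegrable (by fun_prop) _ _
  let G (y : ℝ) : ℝ := (∫ ξ in (0 : ℝ)..y, (w t₂ ξ - w t₁ ξ)) - ∫ τ in t₁..t₂, q τ y
  have hG : Continuous G := by
    unfold G
    fun_prop
  obtain ⟨c, hc⟩ : (Ioo 0 (S t₁)).Nonempty := nonempty_Ioo.2 (H.S_pos t₁)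
  have const_Ioo : EqOn G (fun _ => G c) (Ioo 0 (S t₁)) := fun y hy => by
    have := H.conservation t₁ ht₁ t₂ ht₂ ht c hc y hy
    rw [← intervalIntegral.integral_interval_sub_left (int_w 0 y) (int_w 0 c),
      intervalIntegral.integral_sub (int_q y) (int_q c)] at this
    linarith
  have const_Icc := const_Ioo.closure hG continuous_const
  rw [closure_Ioo (H.S_pos t₁).ne] at const_Icc
  have hG0 : G x = G 0 := (const_Icc hx).trans (const_Icc ⟨le_rfl, (H.S_pos t₁).le⟩).symm
  simp only [G, intervalIntegral.integral_same] at hG0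
  rw [intervalIntegral.integral_sub (int_q x) (int_q 0)]
  linarith

lemma integral_timeQuot_w (H : IsExtendedSol p α β S w q) {h t x : ℝ} (hh : 0 < h) (ht : α ≤ t)
    (hth : t + h ≤ β) (hx : x ∈ Icc 0 (S t)) :
    ∫ ξ in (0 : ℝ)..x, timeQuot w h t ξ = timeAvg q h t x - timeAvg q h t 0 := by
  have hq := H.continuous_q
  have hcons := H.integral_w_sub_eq (t₁ := t) (t₂ := t + h) ⟨ht, by linarith⟩
    ⟨by linarith, hth⟩ (by linarith) hx
  rw [timeAvg_eq_integral_div q hh.ne', timeAvg_eq_integral_div q hh.ne', ← sub_div,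
    ← intervalIntegral.integral_sub, ← hcons]
  · simp only [timeQuot, intervalIntegral.integral_div]
  all_goals exact Continuous.intervalIntegrable (by fun_prop) _ _

lemma hasDerivAt_timeAvg_q (H : IsExtendedSol p α β S w q) {h t x : ℝ} (hh : 0 < h) (ht : α ≤ t)
    (hth : t + h ≤ β) (hx : x ∈ Ioo 0 (S t)) :
    HasDerivAt (timeAvg q h t) (timeQuot w h t x) x := by
  have hquot : Continuous (timeQuot w h t) := by have := H.continuous_w; fun_prop
  refine ((hquot.integral_hasStrictDerivAt 0 x).hasDerivAt.add_const
    (timeAvg q h t 0)).congr_of_eventuallyEq ?_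
  filter_upwards [Ioo_mem_nhds hx.1 hx.2] with y hy
  rw [H.integral_timeQuot_w hh ht hth (Ioo_subset_Icc_self hy), sub_add_cancel]

lemma hasDerivAt_timeQuot_w (H : IsExtendedSol p α β S w q) {h t x : ℝ} (hh : 0 ≤ h)
    (hx : x ∈ Ioo 0 (S t)) : HasDerivAt (timeQuot w h t) (timeQuot q h t x) x := by
  have hS : S t ≤ S (t + h) := H.monotone_S (by linarith)
  exact ((H.hasDerivAt_w (t + h) x ⟨hx.1, hx.2.trans_le hS⟩).sub
    (H.hasDerivAt_w t x hx)).div_const h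

lemma integral_timeAvg_mul_timeQuot (H : IsExtendedSol p α β S w q) {h t : ℝ} (hh : 0 < h)
    (ht : α ≤ t) (hth : t + h ≤ β) :
    ∫ x in (0 : ℝ)..S t, timeAvg q h t x * timeQuot q h t x =
      timeAvg q h t (S t) * timeQuot w h t (S t) - timeAvg q h t 0 * timeQuot w h t 0
        - ∫ x in (0 : ℝ)..S t, timeQuot w h t x ^ 2 := by
  have hw := H.continuous_w
  have hq := H.continuous_q
  have hIoo : Ioo (min 0 (S t)) (max 0 (S t)) = Ioo 0 (S t) := by
    rw [min_eq_left (H.S_pos t).le, max_eq_right (H.S_pos t).le]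
  simpa only [← sq] using intervalIntegral.integral_mul_deriv_eq_deriv_mul_of_hasDerivAt
    (a := 0) (b := S t) (u := timeAvg q h t) (v := timeQuot w h t) (u' := timeQuot w h t)
    (by fun_prop) (by fun_prop)
    (fun x hx => H.hasDerivAt_timeAvg_q hh ht hth (hIoo ▸ hx))
    (fun x hx => H.hasDerivAt_timeQuot_w hh.le (hIoo ▸ hx))
    (Continuous.intervalIntegrable (by fun_prop) _ _)
    (Continuous.intervalIntegrable (by fun_prop) _ _)

end IsExtendedSol

/-! ### Dissipation of the averaged energy -/

/-- The energy of the Steklov average of `(S, w, q)`; at `h = 0` it is the energy itself. -/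
def avgEnergy (p : ℝ) (S : ℝ → ℝ) (w q : ℝ → ℝ → ℝ) (h t : ℝ) : ℝ :=
  1 / 2 * (∫ x in (0 : ℝ)..S t, timeAvg q h t x ^ 2) - timeAvg w h t 0 ^ (p + 1) / (p + 1)

namespace IsExtendedSol

variable {p α β : ℝ} {S : ℝ → ℝ} {w q : ℝ → ℝ → ℝ}

lemma continuous_avgEnergy (hp : 1 ≤ p) (H : IsExtendedSol p α β S w q) (t : ℝ) :
    Continuous fun h => avgEnergy p S w q h t := by
  have hw := H.continuous_w
  have hq := H.continuous_q
  have hpow : Continuous fun h => timeAvg w h t 0 ^ (p + 1) :=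
    Continuous.rpow_const (by fun_prop) fun _ => Or.inr (by linarith)
  unfold avgEnergy
  fun_prop

lemma hasDerivAt_avgEnergy (hp : 1 ≤ p) (H : IsExtendedSol p α β S w q) {h t : ℝ} (hh : 0 < h)
    (ht : α < t) (hth : t + h < β) :
    HasDerivAt (avgEnergy p S w q h)
      (1 / 2 * (-q t (S t) * timeAvg q h t (S t) ^ 2)
        + timeAvg q h t (S t) * timeQuot w h t (S t)
        + (-timeAvg q h t 0 - timeAvg w h t 0 ^ p) * timeQuot w h t 0
        - ∫ x in (0 : ℝ)..S t, timeQuot w h t x ^ 2) t := by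
  have hw := H.continuous_w
  have hq := H.continuous_q
  have gradient := hasDerivAt_integral_moving_endpoint (a := 0)
    (f := fun t x => timeAvg q h t x ^ 2)
    (f' := fun t x => 2 * (timeAvg q h t x * timeQuot q h t x)) (by fun_prop) (by fun_prop)
    (fun t x => ((hasDerivAt_timeAvg hq hh.ne' t x).pow 2).congr_deriv (by simp; ring))
    (H.hasDerivAt_S t ⟨ht, by linarith⟩)
  have boundary := ((hasDerivAt_timeAvg hw hh.ne' t 0).rpow_const (p := p + 1)
    (Or.inr (by linarith))).div_const (p + 1)
  refine ((gradient.const_mul (1 / 2)).sub boundary).congr_deriv ?_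
  have hp1 : p + 1 ≠ 0 := by linarith
  rw [intervalIntegral.integral_const_mul, H.integral_timeAvg_mul_timeQuot hh ht.le hth.le,
    add_sub_cancel_right]
  field_simp
  ring

-- The Stefan condition turns the jump of `w` across the moving boundary into a product of averages
-- that stays continuous up to `h = 0`.
lemma timeQuot_w_free (H : IsExtendedSol p α β S w q) {h t : ℝ} (hh : 0 < h) (ht : α < t)
    (hth : t + h < β) :
    timeQuot w h t (S t) = (∫ θ in (0 : ℝ)..1, -q (t + θ * h) (S (t + θ * h))) *
      ∫ θ in (0 : ℝ)..1, -q (t + h) (S t + θ * (S (t + h) - S t)) := by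
  have hq := H.continuous_q
  have hS := H.continuous_S
  have hmono : S t ≤ S (t + h) := H.monotone_S (by linarith)
  have displacement :
      h * ∫ θ in (0 : ℝ)..1, -q (t + θ * h) (S (t + θ * h)) = S (t + h) - S t := by
    rw [mul_integral_comp_add_mul_unit fun τ => -q τ (S τ)]
    refine intervalIntegral.integral_eq_sub_of_hasDerivAt (fun τ hτ => ?_)
      (Continuous.intervalIntegrable (by fun_prop) _ _)
    rw [uIcc_of_le (by linarith)] at hτ
    exact H.hasDerivAt_S τ ⟨by linarith [hτ.1], by linarith [hτ.2]⟩
  have jump : (S (t + h) - S t) * ∫ θ in (0 : ℝ)..1, -q (t + h) (S t + θ * (S (t + h) - S t)) =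
      w (t + h) (S t) := by
    rw [mul_integral_comp_add_mul_unit fun x => -q (t + h) x, intervalIntegral.integral_neg,
      add_sub_cancel, H.integral_q (H.S_pos t).le hmono le_rfl, H.w_free]
    ring
  rw [timeQuot, H.w_free, sub_zero, ← jump, ← displacement, mul_assoc,
    mul_div_cancel_left₀ _ hh.ne']

lemma eventually_free_boundary_term_lt (H : IsExtendedSol p α β S w q) {a b ε : ℝ} (hε : 0 < ε)
    (ha : α < a) (hb : b < β) :
    ∀ᶠ h in 𝓝[>] (0 : ℝ), ∀ t ∈ Icc a b,
      1 / 2 * (-q t (S t) * timeAvg q h t (S t) ^ 2)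
        + timeAvg q h t (S t) * timeQuot w h t (S t) < ε := by
  have hq := H.continuous_q
  have hS := H.continuous_S
  let G (h t : ℝ) : ℝ := 1 / 2 * (-q t (S t) * timeAvg q h t (S t) ^ 2) + timeAvg q h t (S t) *
    ((∫ θ in (0 : ℝ)..1, -q (t + θ * h) (S (t + θ * h))) *
      ∫ θ in (0 : ℝ)..1, -q (t + h) (S t + θ * (S (t + h) - S t)))
  have hG : Continuous fun z : ℝ × ℝ => G z.1 z.2 := by
    fun_prop
  have hG0 (t : ℝ) : G 0 t < ε := by
    have hcube : q t (S t) ^ 3 ≤ 0 := Odd.pow_nonpos (by decide) (H.q_free_nonpos t)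
    simp only [G, timeAvg_zero, mul_zero, add_zero, sub_self, intervalIntegral.integral_const,
      sub_zero, one_smul]
    linarith
  have hsmall : ∀ᶠ h in 𝓝 (0 : ℝ), ∀ t ∈ Icc a b, G h t < ε :=
    isCompact_Icc.eventually_forall_of_forall_eventually fun t _ =>
      (hG.tendsto (0, t)).eventually_lt_const (hG0 t)
  filter_upwards [hsmall.filter_mono nhdsWithin_le_nhds,
    Ioo_mem_nhdsGT (sub_pos.2 hb)] with h hG_lt hh t ht
  rw [H.timeQuot_w_free hh.1 (by linarith [ht.1]) (by linarith [ht.2, hh.2])]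
  exact hG_lt t ht

end IsExtendedSol

lemma exists_forall_abs_sub_sub_deriv_mul_le {f f' : ℝ → ℝ} {a b ε : ℝ}
    (hf : ∀ x ∈ Icc a b, HasDerivWithinAt f (f' x) (Icc a b) x)
    (hf' : ContinuousOn f' (Icc a b)) (hε : 0 < ε) :
    ∃ δ > 0, ∀ y ∈ Icc a b, ∀ z ∈ Icc a b, |y - z| < δ →
      |f y - f z - f' z * (y - z)| ≤ ε * |y - z| := by
  obtain ⟨δ, hδ, hunif⟩ := Metric.uniformContinuousOn_iff.1
    (isCompact_Icc.uniformContinuousOn_of_continuous hf') ε hε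
  refine ⟨δ, hδ, fun y hy z hz hyz => ?_⟩
  have hmvt := Convex.norm_image_sub_le_of_norm_hasDerivWithin_le
    (f := fun x => f x - f' z * x) (f' := fun x => f' x - f' z) (C := ε)
    (s := Icc a b ∩ Metric.ball z δ) (x := z) (y := y)
    (fun x hx => ((hf x hx.1).mono inter_subset_left).sub
      ((hasDerivWithinAt_id x _).const_mul (f' z) |>.congr_deriv (mul_one _)))
    (fun x hx => (hunif x hx.1 z hz hx.2).le)
    ((convex_Icc a b).inter (convex_ball z δ)) ⟨hz, Metric.mem_ball_self hδ⟩ ⟨hy, hyz⟩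
  rw [Real.norm_eq_abs, Real.norm_eq_abs] at hmvt
  convert hmvt using 2
  ring

-- The affine function commutes with the average, so `g` and the average nearly commute.
lemma abs_integral_comp_sub_comp_integral_le {f g : ℝ → ℝ} {a b c m e : ℝ} (hf : Continuous f)
    (hgf : Continuous fun θ => g (f θ)) (hmem : ∀ θ ∈ Icc (0 : ℝ) 1, f θ ∈ Icc a b)
    (hg : ∀ y ∈ Icc a b, |g y - (c * y + m)| ≤ e) :
    |(∫ θ in (0 : ℝ)..1, g (f θ)) - g (∫ θ in (0 : ℝ)..1, f θ)| ≤ 2 * e := by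
  have avg_mem : ∫ θ in (0 : ℝ)..1, f θ ∈ Icc a b := by
    have lower := intervalIntegral.integral_mono_on zero_le_one (μ := volume)
      intervalIntegrable_const (hf.intervalIntegrable 0 1) fun θ hθ => (hmem θ hθ).1
    have upper := intervalIntegral.integral_mono_on zero_le_one (μ := volume)
      (hf.intervalIntegrable 0 1) intervalIntegrable_const fun θ hθ => (hmem θ hθ).2
    simp only [intervalIntegral.integral_const, sub_zero, one_smul] at lower upper
    exact ⟨lower, upper⟩
  have avg_affine : |(∫ θ in (0 : ℝ)..1, g (f θ)) - (c * (∫ θ in (0 : ℝ)..1, f θ) + m)| ≤ e := by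
    have hbound := intervalIntegral.norm_integral_le_of_norm_le_const (a := 0) (b := 1)
      (f := fun θ => g (f θ) - (c * f θ + m)) (C := e) fun θ hθ => by
        rw [uIoc_of_le zero_le_one] at hθ
        exact hg _ (hmem θ (Ioc_subset_Icc_self hθ))
    rw [intervalIntegral.integral_sub (hgf.intervalIntegrable _ _)
        (Continuous.intervalIntegrable (by fun_prop) _ _),
      intervalIntegral.integral_add (Continuous.intervalIntegrable (by fun_prop) _ _)
        intervalIntegrable_const, intervalIntegral.integral_const_mul] at hbound
    simpa using hbound
  have affine_avg := hg _ avg_mem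
  rw [abs_le] at *
  constructor <;> linarith [avg_affine.1, avg_affine.2, affine_avg.1, affine_avg.2]

namespace IsExtendedSol

variable {p α β : ℝ} {S : ℝ → ℝ} {w q : ℝ → ℝ → ℝ}

lemma exists_pos_bound_q (H : IsExtendedSol p α β S w q) :
    ∃ L > 0, ∀ t ∈ Icc α β, ∀ x ∈ Icc 0 (S α), |q t x| ≤ L := by
  obtain ⟨L, hL⟩ := ((isCompact_Icc (a := α) (b := β)).prod (isCompact_Icc (a := (0 : ℝ))
    (b := S α))).exists_bound_of_continuousOn H.continuous_q.continuousOn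
  exact ⟨max L 1, by positivity, fun t ht x hx => (hL (t, x) ⟨ht, hx⟩).trans (le_max_left _ _)⟩

lemma abs_w_sub_w_zero_le (H : IsExtendedSol p α β S w q) {L : ℝ}
    (hL : ∀ t ∈ Icc α β, ∀ x ∈ Icc 0 (S α), |q t x| ≤ L) {t y : ℝ} (ht : t ∈ Icc α β)
    (hy : y ∈ Icc 0 (S α)) : |w t y - w t 0| ≤ L * y := by
  rw [← H.integral_q le_rfl hy.1 (hy.2.trans (H.monotone_S ht.1))]
  have hbound := intervalIntegral.norm_integral_le_of_norm_le_const (a := 0) (b := y) (f := q t)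
    (C := L) fun x hx => by
      rw [uIoc_of_le hy.1] at hx
      exact hL t ht x ⟨hx.1.le, hx.2.trans hy.2⟩
  rwa [Real.norm_eq_abs, sub_zero, abs_of_nonneg hy.1] at hbound

lemma abs_integral_w_sub_le (H : IsExtendedSol p α β S w q) {L : ℝ}
    (hL : ∀ t ∈ Icc α β, ∀ x ∈ Icc 0 (S α), |q t x| ≤ L) {t₁ t₂ x : ℝ} (ht₁ : t₁ ∈ Icc α β)
    (ht₂ : t₂ ∈ Icc α β) (ht : t₁ ≤ t₂) (hx : x ∈ Icc 0 (S α)) :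
    |∫ ξ in (0 : ℝ)..x, (w t₂ ξ - w t₁ ξ)| ≤ 2 * L * (t₂ - t₁) := by
  rw [H.integral_w_sub_eq ht₁ ht₂ ht ⟨hx.1, hx.2.trans (H.monotone_S ht₁.1)⟩]
  have hbound := intervalIntegral.norm_integral_le_of_norm_le_const (a := t₁) (b := t₂)
    (f := fun τ => q τ x - q τ 0) (C := 2 * L) fun τ hτ => by
      rw [uIoc_of_le ht] at hτ
      have hτ' : τ ∈ Icc α β := ⟨ht₁.1.trans hτ.1.le, hτ.2.trans ht₂.2⟩
      rw [Real.norm_eq_abs]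
      linarith [abs_sub (q τ x) (q τ 0), hL τ hτ' x hx, hL τ hτ' 0 ⟨le_rfl, (H.S_pos α).le⟩]
  rwa [Real.norm_eq_abs, abs_of_nonneg (sub_nonneg.2 ht)] at hbound

-- Averaging over `[0, η]` trades the time increment `η²` for a spatial oscillation of order `η`.
lemma abs_w_zero_sub_le (H : IsExtendedSol p α β S w q) {L : ℝ}
    (hL : ∀ t ∈ Icc α β, ∀ x ∈ Icc 0 (S α), |q t x| ≤ L) {t₁ t₂ η : ℝ} (ht₁ : t₁ ∈ Icc α β)
    (ht₂ : t₂ ∈ Icc α β) (ht : t₁ ≤ t₂) (hη : 0 < η) (hηS : η ≤ S α) (htη : t₂ - t₁ ≤ η ^ 2) :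
    |w t₂ 0 - w t₁ 0| ≤ 4 * L * η := by
  have hw := H.continuous_w
  have hL0 : 0 ≤ L := (abs_nonneg _).trans (hL t₁ ht₁ 0 ⟨le_rfl, (H.S_pos α).le⟩)
  have total := H.abs_integral_w_sub_le hL ht₁ ht₂ ht ⟨hη.le, hηS⟩
  have oscillation : |∫ y in (0 : ℝ)..η, ((w t₂ y - w t₁ y) - (w t₂ 0 - w t₁ 0))|
      ≤ 2 * L * η * η := by
    have hbound := intervalIntegral.norm_integral_le_of_norm_le_const (a := 0) (b := η)
      (f := fun y => (w t₂ y - w t₁ y) - (w t₂ 0 - w t₁ 0)) (C := 2 * L * η) fun y hy => by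
        rw [uIoc_of_le hη.le] at hy
        have hy' : y ∈ Icc 0 (S α) := ⟨hy.1.le, hy.2.trans hηS⟩
        have hLy : L * y ≤ L * η := mul_le_mul_of_nonneg_left hy.2 hL0
        rw [Real.norm_eq_abs, sub_sub_sub_comm]
        linarith [abs_sub (w t₂ y - w t₂ 0) (w t₁ y - w t₁ 0),
          H.abs_w_sub_w_zero_le hL ht₁ hy', H.abs_w_sub_w_zero_le hL ht₂ hy']
    rwa [Real.norm_eq_abs, sub_zero, abs_of_pos hη] at hbound
  rw [intervalIntegral.integral_sub (Continuous.intervalIntegrable (by fun_prop) _ _)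
    intervalIntegrable_const, intervalIntegral.integral_const, sub_zero, smul_eq_mul]
    at oscillation
  have hLt : 2 * L * (t₂ - t₁) ≤ 2 * L * η ^ 2 := by gcongr
  have scaled : η * |w t₂ 0 - w t₁ 0| ≤ η * (4 * L * η) := by
    rw [← abs_of_pos hη, ← abs_mul, abs_of_pos hη]
    rw [abs_le] at total oscillation ⊢
    constructor <;> linarith [total.1, total.2, oscillation.1, oscillation.2]
  exact le_of_mul_le_mul_left scaled hη

lemma abs_flux_defect_le (hp : 0 ≤ p) (H : IsExtendedSol p α β S w q) {h t r c e : ℝ}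
    (hnear : ∀ θ ∈ Icc (0 : ℝ) 1, |w (t + θ * h) 0 - w t 0| ≤ r)
    (haffine : ∀ y, 0 ≤ y → |y - w t 0| ≤ r → |y ^ p - w t 0 ^ p - c * (y - w t 0)| ≤ e) :
    |-timeAvg q h t 0 - timeAvg w h t 0 ^ p| ≤ 2 * e := by
  have hw := H.continuous_w
  have havg : -timeAvg q h t 0 = ∫ θ in (0 : ℝ)..1, w (t + θ * h) 0 ^ p := by
    simp only [timeAvg, ← intervalIntegral.integral_neg, H.flux_zero]
  rw [havg]
  refine abs_integral_comp_sub_comp_integral_le (f := fun θ => w (t + θ * h) 0)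
    (g := fun y => y ^ p) (a := max 0 (w t 0 - r)) (b := w t 0 + r) (c := c)
    (m := w t 0 ^ p - c * w t 0) (by fun_prop)
    (Continuous.rpow_const (by fun_prop) fun _ => Or.inr hp) (fun θ hθ => ?_) fun y hy => ?_
  · have := abs_le.1 (hnear θ hθ)
    exact ⟨max_le (H.w_nonneg _ _) (by linarith [this.1]), by linarith [this.2]⟩
  · have hy1 := max_le_iff.1 hy.1
    have := haffine y hy1.1 (abs_le.2 ⟨by linarith, by linarith [hy.2]⟩)
    rwa [show y ^ p - (c * y + (w t 0 ^ p - c * w t 0)) = y ^ p - w t 0 ^ p - c * (y - w t 0) by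
      ring]

lemma exists_affine_approx_w_zero_rpow (hp : 1 ≤ p) (H : IsExtendedSol p α β S w q) {ε : ℝ}
    (hε : 0 < ε) :
    ∃ ρ > 0, ∀ t ∈ Icc α β, ∀ r < ρ, ∀ y, 0 ≤ y → |y - w t 0| ≤ r →
      |y ^ p - w t 0 ^ p - p * w t 0 ^ (p - 1) * (y - w t 0)| ≤ ε * r := by
  have hw := H.continuous_w
  obtain ⟨B, hB⟩ := (isCompact_Icc (a := α) (b := β)).exists_bound_of_continuousOn
    (f := fun τ => w τ 0) (by fun_prop)
  obtain ⟨δ, hδ, htaylor⟩ := exists_forall_abs_sub_sub_deriv_mul_le (a := 0) (b := B + 1)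
    (fun x _ => (Real.hasDerivAt_rpow_const (x := x) (p := p) (Or.inr hp)).hasDerivWithinAt)
    (continuous_const.mul (Real.continuous_rpow_const (by linarith))).continuousOn hε
  refine ⟨min δ 1, by positivity, fun t ht r hr y hy hyr => ?_⟩
  have hwB : w t 0 ≤ B := (le_abs_self _).trans (hB t ht)
  have hrδ : r < δ := hr.trans_le (min_le_left _ _)
  have hr1 : r < 1 := hr.trans_le (min_le_right _ _)
  refine (htaylor y ⟨hy, by linarith [(abs_le.1 hyr).2]⟩ _ ⟨H.w_nonneg t 0, by linarith⟩
    (hyr.trans_lt hrδ)).trans ?_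
  gcongr

lemma eventually_fixed_boundary_term_le (hp : 1 ≤ p) (H : IsExtendedSol p α β S w q) {a b ε : ℝ}
    (hε : 0 < ε) (ha : α ≤ a) (hb : b < β) :
    ∀ᶠ h in 𝓝[>] (0 : ℝ), ∀ t ∈ Icc a b,
      (-timeAvg q h t 0 - timeAvg w h t 0 ^ p) * timeQuot w h t 0 ≤ ε := by
  obtain ⟨L, hL0, hL⟩ := H.exists_pos_bound_q
  obtain ⟨ρ, hρ, haffine⟩ :=
    H.exists_affine_approx_w_zero_rpow hp (ε := ε / (32 * L ^ 2)) (by positivity)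
  have hsqrt : Tendsto (fun h => √h) (𝓝[>] 0) (𝓝 0) := by
    simpa using (Real.continuous_sqrt.tendsto 0).mono_left nhdsWithin_le_nhds
  have hsqrtL : Tendsto (fun h => 4 * L * √h) (𝓝[>] 0) (𝓝 0) := by
    simpa using hsqrt.const_mul (4 * L)
  filter_upwards [hsqrt.eventually_le_const (H.S_pos α), hsqrtL.eventually_lt_const hρ,
    Ioo_mem_nhdsGT (sub_pos.2 hb)] with h hηS hηρ ⟨hh0, hhb⟩ t ht
  have hη : 0 < √h := Real.sqrt_pos.2 hh0
  have hη2 : √h ^ 2 = h := Real.sq_sqrt hh0.le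
  have htαβ : t ∈ Icc α β := ⟨ha.trans ht.1, ht.2.trans hb.le⟩
  have near : ∀ θ ∈ Icc (0 : ℝ) 1, |w (t + θ * h) 0 - w t 0| ≤ 4 * L * √h := fun θ hθ => by
    have hθ0 : 0 ≤ θ * h := mul_nonneg hθ.1 hh0.le
    have hθ1 : θ * h ≤ h := mul_le_of_le_one_left hh0.le hθ.2
    exact H.abs_w_zero_sub_le hL htαβ ⟨by linarith [htαβ.1], by linarith [ht.2]⟩ (by linarith)
      hη hηS (by linarith)
  have defect := H.abs_flux_defect_le (by linarith) near (haffine t htαβ _ hηρ)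
  have quot : |timeQuot w h t 0| ≤ 4 * L * √h / h := by
    rw [timeQuot, abs_div, abs_of_pos hh0]
    have := near 1 ⟨zero_le_one, le_rfl⟩
    rw [one_mul] at this
    gcongr
  calc _ ≤ |-timeAvg q h t 0 - timeAvg w h t 0 ^ p| * |timeQuot w h t 0| :=
        (le_abs_self _).trans (abs_mul _ _).le
    _ ≤ 2 * (ε / (32 * L ^ 2) * (4 * L * √h)) * (4 * L * √h / √h ^ 2) := by rw [hη2]; gcongr
    _ = ε := by field_simp; ring

end IsExtendedSol

namespace IsExtendedSol

variable {p α β : ℝ} {S : ℝ → ℝ} {w q : ℝ → ℝ → ℝ}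

lemma sq_timeAvg_q_sub_le (H : IsExtendedSol p α β S w q) {h t x : ℝ} (hh : 0 < h) (ht : α ≤ t)
    (hth : t + h ≤ β) (hx : x ∈ Icc 0 (S t)) :
    (timeAvg q h t x - timeAvg q h t 0) ^ 2 ≤ x * ∫ ξ in (0 : ℝ)..S t, timeQuot w h t ξ ^ 2 := by
  have hquot : Continuous (timeQuot w h t) := by have := H.continuous_w; fun_prop
  rw [← H.integral_timeQuot_w hh ht hth hx]
  calc (∫ ξ in (0 : ℝ)..x, timeQuot w h t ξ) ^ 2
      ≤ x * ∫ ξ in (0 : ℝ)..x, timeQuot w h t ξ ^ 2 := by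
        simpa using sq_integral_le_mul_integral_sq_of_continuousOn hx.1 hquot.continuousOn
    _ ≤ x * ∫ ξ in (0 : ℝ)..S t, timeQuot w h t ξ ^ 2 := by
        refine mul_le_mul_of_nonneg_left ?_ hx.1
        exact intervalIntegral.integral_mono_interval le_rfl hx.1 hx.2
          (.of_forall fun ξ => sq_nonneg _) ((hquot.pow 2).intervalIntegrable _ _)

lemma eventually_avgEnergy_sub_le (hp : 1 ≤ p) (H : IsExtendedSol p α β S w q) {a b x ε : ℝ}
    (ha : α < a) (hab : a ≤ b) (hb : b < β) (hx : 0 < x) (hxS : x ≤ S α) (hε : 0 < ε) :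
    ∀ᶠ h in 𝓝[>] (0 : ℝ), avgEnergy p S w q h b - avgEnergy p S w q h a ≤
      ∫ t in a..b, (ε - (timeAvg q h t x - timeAvg q h t 0) ^ 2 / x) := by
  have hq := H.continuous_q
  filter_upwards [H.eventually_free_boundary_term_lt (half_pos hε) ha hb,
    H.eventually_fixed_boundary_term_le hp (half_pos hε) ha.le hb,
    Ioo_mem_nhdsGT (sub_pos.2 hb)] with h hfree hfixed ⟨hh0, hhb⟩
  have hderiv (t : ℝ) (ht : t ∈ Icc a b) := H.hasDerivAt_avgEnergy hp hh0 (t := t)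
    (by linarith [ht.1]) (by linarith [ht.2])
  refine intervalIntegral.sub_le_integral_of_hasDeriv_right_of_le hab
    (fun t ht => (hderiv t ht).continuousAt.continuousWithinAt)
    (fun t ht => (hderiv t (Ioo_subset_Icc_self ht)).hasDerivWithinAt)
    (Continuous.integrableOn_Icc (by fun_prop)) fun t ht => ?_
  have ht := Ioo_subset_Icc_self ht
  have dissipation := H.sq_timeAvg_q_sub_le (h := h) (t := t) (x := x) hh0
    (by linarith [ht.1]) (by linarith [ht.2])
    ⟨hx.le, hxS.trans (H.monotone_S (by linarith [ht.1]))⟩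
  rw [← div_le_iff₀' hx] at dissipation
  linarith [hfree t ht, hfixed t ht]

theorem integral_sq_q_sub_le (hp : 1 ≤ p) (H : IsExtendedSol p α β S w q) {a b x : ℝ}
    (ha : α < a) (hab : a ≤ b) (hb : b < β) (hx : 0 < x) (hxS : x ≤ S α) :
    ∫ t in a..b, (q t x - q t 0) ^ 2 ≤
      x * (avgEnergy p S w q 0 a - avgEnergy p S w q 0 b) := by
  have hq := H.continuous_q
  have hlim {f : ℝ → ℝ} (hf : Continuous f) : Tendsto f (𝓝[>] 0) (𝓝 (f 0)) :=
    (hf.tendsto 0).mono_left nhdsWithin_le_nhds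
  rw [← div_le_iff₀' hx]
  refine le_of_forall_pos_le_add fun ε hε => ?_
  have hlen : 0 < b - a + 1 := by linarith
  have limit := le_of_tendsto_of_tendsto
    (hlim (f := fun h => avgEnergy p S w q h b - avgEnergy p S w q h a)
      ((H.continuous_avgEnergy hp b).sub (H.continuous_avgEnergy hp a)))
    (hlim (f := fun h => ∫ t in a..b,
      (ε / (b - a + 1) - (timeAvg q h t x - timeAvg q h t 0) ^ 2 / x)) (by fun_prop))
    (H.eventually_avgEnergy_sub_le hp ha hab hb hx hxS (div_pos hε hlen))
  simp only [timeAvg_zero] at limit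
  rw [intervalIntegral.integral_sub intervalIntegrable_const
    (Continuous.intervalIntegrable (by fun_prop) _ _), intervalIntegral.integral_const,
    intervalIntegral.integral_div, smul_eq_mul] at limit
  have : (b - a) * (ε / (b - a + 1)) ≤ ε := by
    rw [mul_div_assoc', div_le_iff₀ hlen]
    nlinarith
  linarith

end IsExtendedSol

/-! ### Consequences of dissipation -/

lemma le_mul_rpow_add_sub {p μ m x v : ℝ} (hp : 1 ≤ p) (hμ : 0 ≤ μ) (hm : μ ≤ m)
    (hv : 0 ≤ v) (hx : 0 ≤ x) (hxμ : 2 ≤ x * μ ^ (p - 1)) : μ ≤ x * m ^ p + v - m := by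
  have hm0 := hμ.trans hm
  have hpow : m ^ p = m ^ (p - 1) * m := by
    rw [← rpow_add_one' hm0 (by linarith), sub_add_cancel]
  have : 2 * m ≤ x * m ^ p := by
    rw [hpow, ← mul_assoc]
    refine mul_le_mul_of_nonneg_right (hxμ.trans ?_) hm0
    exact mul_le_mul_of_nonneg_left (rpow_le_rpow hμ hm (by linarith)) hx
  linarith

namespace IsExtendedSol

variable {p α β : ℝ} {S : ℝ → ℝ} {w q : ℝ → ℝ → ℝ}

lemma integral_sq_deriv_w (H : IsExtendedSol p α β S w q) (t : ℝ) :
    ∫ x in (0 : ℝ)..S t, deriv (w t) x ^ 2 = ∫ x in (0 : ℝ)..S t, q t x ^ 2 :=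
  intervalIntegral.integral_congr_Ioo_of_le (H.S_pos t).le fun x hx => by
    simp only [(H.hasDerivAt_w t x hx).deriv]

lemma avgEnergy_zero (H : IsExtendedSol p α β S w q) (t : ℝ) :
    avgEnergy p S w q 0 t = energy p S w t := by
  simp only [avgEnergy, energy, timeAvg_zero, H.integral_sq_deriv_w]

lemma integral_sq_q_sub_le_energy (hp : 1 ≤ p) (H : IsExtendedSol p α β S w q) {a b x : ℝ}
    (ha : α < a) (hab : a ≤ b) (hb : b < β) (hx : x ∈ Ioc 0 (S α)) :
    ∫ t in a..b, (q t x - q t 0) ^ 2 ≤ x * (energy p S w a - energy p S w b) := by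
  simpa only [H.avgEnergy_zero] using H.integral_sq_q_sub_le hp ha hab hb hx.1 hx.2

lemma energy_le (hp : 1 ≤ p) (H : IsExtendedSol p α β S w q) {a b : ℝ} (ha : α < a) (hab : a ≤ b)
    (hb : b < β) : energy p S w b ≤ energy p S w a := by
  have hS := H.S_pos α
  have dissipation := H.integral_sq_q_sub_le_energy hp ha hab hb ⟨hS, le_rfl⟩
  have := intervalIntegral.integral_nonneg (μ := volume) hab
    fun t _ => sq_nonneg (q t (S α) - q t 0)
  exact sub_nonneg.1 (nonneg_of_mul_nonneg_right (this.trans dissipation) hS)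

lemma sq_integral_w_sub_le (hp : 1 ≤ p) (H : IsExtendedSol p α β S w q) {a b η : ℝ}
    (ha : α < a) (hab : a ≤ b) (hb : b < β) (hη : η ∈ Ioc 0 (S α)) :
    ((∫ x in (0 : ℝ)..η, w b x) - ∫ x in (0 : ℝ)..η, w a x) ^ 2 ≤
      η * (b - a) * (energy p S w a - energy p S w b) := by
  have hw := H.continuous_w
  have hflux : Continuous fun t => q t η - q t 0 := by have := H.continuous_q; fun_prop
  have hηa : η ≤ S a := hη.2.trans (H.monotone_S ha.le)
  rw [← intervalIntegral.integral_sub (Continuous.intervalIntegrable (by fun_prop) _ _)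
      (Continuous.intervalIntegrable (by fun_prop) _ _),
    H.integral_w_sub_eq ⟨ha.le, by linarith⟩ ⟨by linarith, hb.le⟩ hab ⟨hη.1.le, hηa⟩]
  calc (∫ t in a..b, (q t η - q t 0)) ^ 2
      ≤ (b - a) * ∫ t in a..b, (q t η - q t 0) ^ 2 :=
        sq_integral_le_mul_integral_sq_of_continuousOn hab hflux.continuousOn
    _ ≤ (b - a) * (η * (energy p S w a - energy p S w b)) :=
        mul_le_mul_of_nonneg_left (H.integral_sq_q_sub_le_energy hp ha hab hb hη)
          (sub_nonneg.2 hab)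
    _ = η * (b - a) * (energy p S w a - energy p S w b) := by ring

lemma sq_w_sub_w_zero_le (H : IsExtendedSol p α β S w q) {t y : ℝ} (hy : y ∈ Icc 0 (S t)) :
    (w t y - w t 0) ^ 2 ≤ y * ∫ x in (0 : ℝ)..S t, q t x ^ 2 := by
  have hq : Continuous (q t) := by have := H.continuous_q; fun_prop
  rw [← H.integral_q le_rfl hy.1 hy.2]
  calc (∫ x in (0 : ℝ)..y, q t x) ^ 2
      ≤ y * ∫ x in (0 : ℝ)..y, q t x ^ 2 := by
        simpa using sq_integral_le_mul_integral_sq_of_continuousOn hy.1 hq.continuousOn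
    _ ≤ y * ∫ x in (0 : ℝ)..S t, q t x ^ 2 := by
        refine mul_le_mul_of_nonneg_left ?_ hy.1
        exact intervalIntegral.integral_mono_interval le_rfl hy.1 hy.2
          (.of_forall fun x => sq_nonneg _) ((hq.pow 2).intervalIntegrable _ _)

lemma sq_integral_w_sub_mul_w_zero_le (H : IsExtendedSol p α β S w q) {t η : ℝ}
    (hη : η ∈ Icc 0 (S t)) :
    ((∫ x in (0 : ℝ)..η, w t x) - η * w t 0) ^ 2 ≤
      η ^ 3 * (2 * (energy p S w t + w t 0 ^ (p + 1) / (p + 1))) := by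
  have hw : Continuous (w t) := by have := H.continuous_w; fun_prop
  have hdev : Continuous fun x => w t x - w t 0 := by fun_prop
  set N := ∫ x in (0 : ℝ)..S t, q t x ^ 2
  have hN0 : 0 ≤ N := intervalIntegral.integral_nonneg (H.S_pos t).le fun x _ => sq_nonneg _
  have hNE : 2 * (energy p S w t + w t 0 ^ (p + 1) / (p + 1)) = N := by
    rw [energy, H.integral_sq_deriv_w]
    ring
  have hconst : (∫ x in (0 : ℝ)..η, w t x) - η * w t 0 =
      ∫ x in (0 : ℝ)..η, (w t x - w t 0) := by
    rw [intervalIntegral.integral_sub (hw.intervalIntegrable _ _) intervalIntegrable_const]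
    simp
  rw [hNE, hconst]
  calc (∫ x in (0 : ℝ)..η, (w t x - w t 0)) ^ 2
      ≤ η * ∫ x in (0 : ℝ)..η, (w t x - w t 0) ^ 2 := by
        simpa using sq_integral_le_mul_integral_sq_of_continuousOn hη.1 hdev.continuousOn
    _ ≤ η * ∫ _ in (0 : ℝ)..η, η * N := by
        refine mul_le_mul_of_nonneg_left (intervalIntegral.integral_mono_on hη.1
          ((hdev.pow 2).intervalIntegrable _ _) intervalIntegrable_const fun x hx => ?_) hη.1
        exact (H.sq_w_sub_w_zero_le ⟨hx.1, hx.2.trans hη.2⟩).trans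
          (mul_le_mul_of_nonneg_right hx.2 hN0)
    _ = η ^ 3 * N := by
        rw [intervalIntegral.integral_const, smul_eq_mul]
        ring

lemma neg_energy_le (H : IsExtendedSol p α β S w q) (t : ℝ) :
    -energy p S w t ≤ w t 0 ^ (p + 1) / (p + 1) := by
  have := intervalIntegral.integral_nonneg (μ := volume) (H.S_pos t).le
    fun x _ => sq_nonneg (deriv (w t) x)
  rw [energy]
  linarith

lemma flux_balance_eq_integral (H : IsExtendedSol p α β S w q) {t x : ℝ} (hx : x ∈ Icc 0 (S t)) :
    x * w t 0 ^ p + w t x - w t 0 = ∫ y in (0 : ℝ)..x, (q t y - q t 0) := by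
  have hq : Continuous (q t) := by have := H.continuous_q; fun_prop
  rw [intervalIntegral.integral_sub (hq.intervalIntegrable _ _) intervalIntegrable_const,
    H.integral_q le_rfl hx.1 hx.2, intervalIntegral.integral_const, ← H.flux_zero, smul_eq_mul]
  ring

lemma integral_sq_flux_balance_le (hp : 1 ≤ p) (H : IsExtendedSol p α β S w q) {a b x : ℝ}
    (ha : α < a) (hab : a ≤ b) (hb : b < β) (hx : x ∈ Ioc 0 (S α)) :
    ∫ t in a..b, (x * w t 0 ^ p + w t x - w t 0) ^ 2 ≤
      x ^ 3 * (energy p S w a - energy p S w b) := by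
  have hq := H.continuous_q
  have pointwise (t : ℝ) (ht : t ∈ Icc a b) : (x * w t 0 ^ p + w t x - w t 0) ^ 2 ≤
      x * ∫ y in (0 : ℝ)..x, (q t y - q t 0) ^ 2 := by
    rw [H.flux_balance_eq_integral
      ⟨hx.1.le, hx.2.trans (H.monotone_S (ha.le.trans ht.1))⟩]
    simpa using sq_integral_le_mul_integral_sq_of_continuousOn hx.1.le
      (f := fun y => q t y - q t 0) (Continuous.continuousOn (by fun_prop))
  have hw := H.continuous_w
  have hpow : Continuous fun t => w t 0 ^ p :=
    Continuous.rpow_const (by fun_prop) fun _ => Or.inr (by linarith)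
  have hdiff := sub_nonneg.2 (H.energy_le hp ha hab hb)
  calc ∫ t in a..b, (x * w t 0 ^ p + w t x - w t 0) ^ 2
      ≤ ∫ t in a..b, x * ∫ y in (0 : ℝ)..x, (q t y - q t 0) ^ 2 :=
        intervalIntegral.integral_mono_on hab (Continuous.intervalIntegrable (by fun_prop) _ _)
          (Continuous.intervalIntegrable (by fun_prop) _ _) pointwise
    _ = x * ∫ y in (0 : ℝ)..x, ∫ t in a..b, (q t y - q t 0) ^ 2 := by
        rw [intervalIntegral.integral_const_mul,
          integral_integral_swap_of_continuousOn
            (F := fun t y => (q t y - q t 0) ^ 2) (Continuous.continuousOn (by fun_prop))]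
    _ ≤ x * ∫ _ in (0 : ℝ)..x, x * (energy p S w a - energy p S w b) := by
        refine mul_le_mul_of_nonneg_left (intervalIntegral.integral_mono_on_of_le_Ioo hx.1.le
          (Continuous.intervalIntegrable (by fun_prop) _ _) intervalIntegrable_const
          fun y hy => ?_) hx.1.le
        exact (H.integral_sq_q_sub_le_energy hp ha hab hb ⟨hy.1, hy.2.le.trans hx.2⟩).trans
          (mul_le_mul_of_nonneg_right hy.2.le hdiff)
    _ = x ^ 3 * (energy p S w a - energy p S w b) := by
        rw [intervalIntegral.integral_const, smul_eq_mul]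
        ring

lemma dwell_time_le (hp : 1 ≤ p) (H : IsExtendedSol p α β S w q) {a b x μ : ℝ}
    (ha : α < a) (hab : a ≤ b) (hb : b < β) (hμ : 0 ≤ μ) (hx : x ∈ Ioc 0 (S α))
    (hxμ : 2 ≤ x * μ ^ (p - 1)) (hm : ∀ t ∈ Icc a b, μ ≤ w t 0) :
    (b - a) * μ ^ 2 ≤ x ^ 3 * (energy p S w a - energy p S w b) := by
  have hw := H.continuous_w
  have hpow : Continuous fun t => w t 0 ^ p :=
    Continuous.rpow_const (by fun_prop) fun _ => Or.inr (by linarith)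
  calc (b - a) * μ ^ 2 = ∫ _ in a..b, μ ^ 2 := by simp
    _ ≤ ∫ t in a..b, (x * w t 0 ^ p + w t x - w t 0) ^ 2 :=
        intervalIntegral.integral_mono_on hab intervalIntegrable_const
          (Continuous.intervalIntegrable (by fun_prop) _ _) fun t ht =>
            pow_le_pow_left₀ hμ
              (le_mul_rpow_add_sub hp hμ (hm t ht) (H.w_nonneg t x) hx.1.le hxμ) 2
    _ ≤ x ^ 3 * (energy p S w a - energy p S w b) :=
        H.integral_sq_flux_balance_le hp ha hab hb hx

end IsExtendedSol

/-! ### From the energy estimates to the blow-up rate -/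

/-- What the energy argument knows about a solution on the time interval `(α, β)`: `m t` stands for
the boundary value `u(t, 0)`, `F t` for minus the energy and `A t η` for `∫₀^η u(t, x) dx`, while
`ℓ` bounds the free boundary from below. -/
structure EnergyControl (p ℓ α β : ℝ) (m F : ℝ → ℝ) (A : ℝ → ℝ → ℝ) : Prop where
  continuousOn_trace : ContinuousOn m (Ioo α β)
  trace_nonneg : ∀ t ∈ Ioo α β, 0 ≤ m t
  monotoneOn : MonotoneOn F (Ioo α β)
  le_trace_rpow : ∀ t ∈ Ioo α β, F t ≤ m t ^ (p + 1) / (p + 1)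
  sq_mass_sub_trace_le : ∀ t ∈ Ioo α β, ∀ η ∈ Ioc 0 ℓ,
    (A t η - η * m t) ^ 2 ≤ η ^ 3 * (2 * (m t ^ (p + 1) / (p + 1) - F t))
  sq_mass_increment_le : ∀ a ∈ Ioo α β, ∀ b ∈ Ioo α β, a ≤ b → ∀ η ∈ Ioc 0 ℓ,
    (A b η - A a η) ^ 2 ≤ η * (b - a) * (F b - F a)
  dwell_time_le : ∀ a ∈ Ioo α β, ∀ b ∈ Ioo α β, a ≤ b → ∀ x ∈ Ioc 0 ℓ, ∀ μ, 0 ≤ μ →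
    2 ≤ x * μ ^ (p - 1) → (∀ t ∈ Icc a b, μ ≤ m t) → (b - a) * μ ^ 2 ≤ x ^ 3 * (F b - F a)

lemma IsExtendedSol.energyControl {p α β : ℝ} {S : ℝ → ℝ} {w q : ℝ → ℝ → ℝ} (hp : 1 ≤ p)
    (H : IsExtendedSol p α β S w q) :
    EnergyControl p (S α) α β (fun t => w t 0) (fun t => -energy p S w t)
      fun t η => ∫ x in (0 : ℝ)..η, w t x where
  continuousOn_trace := by
    have := H.continuous_w
    exact Continuous.continuousOn (by fun_prop)
  trace_nonneg t _ := H.w_nonneg t 0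
  monotoneOn a ha b hb hab := neg_le_neg (H.energy_le hp ha.1 hab hb.2)
  le_trace_rpow t _ := H.neg_energy_le t
  sq_mass_sub_trace_le t ht η hη := by
    rw [sub_neg_eq_add, add_comm (_ / _)]
    exact H.sq_integral_w_sub_mul_w_zero_le ⟨hη.1.le, hη.2.trans (H.monotone_S ht.1.le)⟩
  sq_mass_increment_le a ha b hb hab η hη := by
    rw [neg_sub_neg]
    exact H.sq_integral_w_sub_le hp ha.1 hab hb.2 hη
  dwell_time_le a ha b hb hab x hx μ hμ hxμ hm := by
    rw [neg_sub_neg]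
    exact H.dwell_time_le hp ha.1 hab hb.2 hμ hx hxμ hm

lemma exists_eq_and_forall_le_of_continuousOn {f : ℝ → ℝ} {a b μ : ℝ} (hab : a ≤ b)
    (hf : ContinuousOn f (Icc a b)) (ha : f a ≤ μ) (hb : μ ≤ f b) :
    ∃ c ∈ Icc a b, f c = μ ∧ ∀ t ∈ Icc c b, μ ≤ f t := by
  have hcompact : IsCompact (Icc a b ∩ f ⁻¹' {μ}) :=
    isCompact_Icc.of_isClosed_subset
      (hf.preimage_isClosed_of_isClosed isClosed_Icc isClosed_singleton) inter_subset_left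
  obtain ⟨t₀, ht₀, hft₀⟩ := intermediate_value_Icc hab hf ⟨ha, hb⟩
  obtain ⟨c, ⟨hc, hfc⟩, hlast⟩ := hcompact.exists_isGreatest ⟨t₀, ht₀, hft₀⟩
  refine ⟨c, hc, hfc, fun t ht => ?_⟩
  by_contra! hlt
  obtain ⟨τ, hτ, hfτ⟩ := intermediate_value_Icc ht.2
    (hf.mono (Icc_subset_Icc (hc.1.trans ht.1) le_rfl)) ⟨hlt.le, hb⟩
  have hτc : τ ≤ c := hlast ⟨⟨hc.1.trans (ht.1.trans hτ.1), hτ.2⟩, hfτ⟩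
  obtain rfl : t = c := le_antisymm (hτ.1.trans hτc) ht.1
  exact hlt.ne hfc

lemma le_div_one_sub_of_forall_exists_le {ι : Type*} {s : Set ι} {g : ι → ℝ} {c k : ℝ}
    (hbdd : BddAbove (g '' s)) (hk₀ : 0 ≤ k) (hk₁ : k < 1)
    (hstep : ∀ x ∈ s, ∃ y ∈ s, g x ≤ c + k * g y) {x : ι} (hx : x ∈ s) : g x ≤ c / (1 - k) := by
  have le_sup {y : ι} (hy : y ∈ s) : g y ≤ sSup (g '' s) := le_csSup hbdd (mem_image_of_mem g hy)
  have hsup : sSup (g '' s) ≤ c + k * sSup (g '' s) := by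
    refine csSup_le ⟨_, mem_image_of_mem g hx⟩ ?_
    rintro _ ⟨y, hy, rfl⟩
    obtain ⟨z, hz, hyz⟩ := hstep y hy
    exact hyz.trans (by gcongr; exact le_sup hz)
  refine (le_sup hx).trans ?_
  rw [le_div_iff₀ (sub_pos.2 hk₁)]
  linarith

lemma mul_rpow_le_of_growth {F : ℝ → ℝ} {a b r L κ : ℝ} (hr : 0 < r) (hL : 0 < L) (hκ : 1 < κ)
    (hab : a ≤ b) (hpos : 0 < F a) (hmono : MonotoneOn F (Icc a b))
    (hgrowth : ∀ t ∈ Icc a b, t + L * (F t ^ r)⁻¹ ≤ b → κ * F t ≤ F (t + L * (F t ^ r)⁻¹)) :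
    (b - a) * F a ^ r ≤ L / (1 - (κ ^ r)⁻¹) := by
  have hF (t : ℝ) (ht : t ∈ Icc a b) : 0 < F t :=
    hpos.trans_le (hmono (left_mem_Icc.2 hab) ht ht.1)
  have hκr : 1 < κ ^ r := one_lt_rpow hκ hr
  have hbdd : BddAbove ((fun t => (b - t) * F t ^ r) '' Icc a b) := by
    refine ⟨(b - a) * F b ^ r, ?_⟩
    rintro _ ⟨t, ht, rfl⟩
    have := rpow_le_rpow (hF t ht).le (hmono ht (right_mem_Icc.2 hab) ht.2) hr.le
    exact mul_le_mul (by linarith [ht.1]) this (rpow_nonneg (hF t ht).le r) (sub_nonneg.2 hab)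
  refine le_div_one_sub_of_forall_exists_le hbdd (by positivity) (inv_lt_one_of_one_lt₀ hκr)
    (fun t ht => ?_) (left_mem_Icc.2 hab)
  have hFt := rpow_pos_of_pos (hF t ht) r
  have hstep : L * (F t ^ r)⁻¹ * F t ^ r = L := inv_mul_cancel_right₀ hFt.ne' L
  have hstep_pos : 0 < L * (F t ^ r)⁻¹ := by positivity
  set t' := t + L * (F t ^ r)⁻¹ with ht'
  rcases le_total b t' with hb | hb
  · refine ⟨b, right_mem_Icc.2 hab, ?_⟩
    have := mul_le_mul_of_nonneg_right (by linarith : b - t ≤ L * (F t ^ r)⁻¹) hFt.le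
    simp only [sub_self, zero_mul, mul_zero]
    linarith
  · refine ⟨t', ⟨by linarith [ht.1], hb⟩, ?_⟩
    have hpow : F t ^ r ≤ (κ ^ r)⁻¹ * F t' ^ r := by
      rw [le_inv_mul_iff₀ (by linarith), ← mul_rpow (by linarith) (hF t ht).le]
      exact rpow_le_rpow (mul_pos (by linarith) (hF t ht)).le (hgrowth t ht hb) hr.le
    calc (b - t) * F t ^ r = L + (b - t') * F t ^ r := by rw [← hstep, ht']; ring
      _ ≤ L + (b - t') * ((κ ^ r)⁻¹ * F t' ^ r) := by gcongr
      _ = L + (κ ^ r)⁻¹ * ((b - t') * F t' ^ r) := by ring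

lemma rpow_one_sub_mul_rpow_add_one {μ : ℝ} (hμ : 0 < μ) (p : ℝ) :
    μ ^ (1 - p) * μ ^ (p + 1) = μ ^ 2 := by
  rw [← rpow_add hμ, ← rpow_natCast]
  congr 1
  push_cast
  ring

lemma rpow_one_sub_mul_rpow_sub_one {μ : ℝ} (hμ : 0 < μ) (p : ℝ) :
    μ ^ (1 - p) * μ ^ (p - 1) = 1 := by
  rw [← rpow_add hμ]
  simp

lemma eventually_two_mul_rpow_one_sub_le {p ℓ : ℝ} (hp : 1 < p) (hℓ : 0 < ℓ) :
    ∀ᶠ μ : ℝ in atTop, 2 * μ ^ (1 - p) ≤ ℓ := by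
  have hlim : Tendsto (fun μ : ℝ => 2 * μ ^ (1 - p)) atTop (𝓝 0) := by
    simpa using (tendsto_rpow_neg_atTop (sub_pos.2 hp)).const_mul 2
  filter_upwards [hlim.eventually_lt_const hℓ] with μ hμ using hμ.le

/-- The dimensionless width of the boundary layer: on `(0, layerFactor p * μ ^ (1 - p))` the mass of
a solution with boundary value at most `2 * μ` and energy at most `μ ^ (p + 1)` is, up to the
fraction `1 / 4` of `μ`, that of a constant. -/
def layerFactor (p : ℝ) : ℝ := (48 * 2 ^ (p + 1))⁻¹

lemma layerFactor_pos (p : ℝ) : 0 < layerFactor p := by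
  unfold layerFactor
  positivity

lemma layerFactor_le_two {p : ℝ} (hp : 0 ≤ p) : layerFactor p ≤ 2 := by
  have : (1 : ℝ) ≤ 2 ^ (p + 1) := one_le_rpow one_le_two (by linarith)
  rw [layerFactor, inv_le_comm₀ (by positivity) two_pos]
  linarith

namespace EnergyControl

variable {p ℓ α β : ℝ} {m F : ℝ → ℝ} {A : ℝ → ℝ → ℝ}

lemma abs_mass_sub_trace_le (hp : 1 ≤ p) (H : EnergyControl p ℓ α β m F A) {t μ η : ℝ}
    (ht : t ∈ Ioo α β) (hμ : 0 < μ) (hm : m t ≤ 2 * μ) (hF : -μ ^ (p + 1) ≤ F t)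
    (hη : η = layerFactor p * μ ^ (1 - p)) (hηℓ : η ≤ ℓ) :
    |A t η - η * m t| ≤ η * μ / 4 := by
  have hη₀ : 0 < η := hη ▸ mul_pos (layerFactor_pos p) (rpow_pos_of_pos hμ _)
  have hμp : 0 < μ ^ (p + 1) := rpow_pos_of_pos hμ _
  have htwo : (1 : ℝ) ≤ 2 ^ (p + 1) := one_le_rpow one_le_two (by linarith)
  have htrace : m t ^ (p + 1) / (p + 1) ≤ 2 ^ (p + 1) * μ ^ (p + 1) / 2 := by
    rw [← mul_rpow zero_le_two hμ.le]
    exact div_le_div₀ (by positivity) (rpow_le_rpow (H.trace_nonneg t ht) hm (by linarith))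
      two_pos (by linarith)
  have hexcess : 2 * (m t ^ (p + 1) / (p + 1) - F t) ≤ 3 * (2 ^ (p + 1) * μ ^ (p + 1)) := by
    linarith [le_mul_of_one_le_left hμp.le htwo]
  refine abs_le_of_sq_le_sq ?_ (by positivity)
  calc (A t η - η * m t) ^ 2
      ≤ η ^ 3 * (2 * (m t ^ (p + 1) / (p + 1) - F t)) := H.sq_mass_sub_trace_le t ht η ⟨hη₀, hηℓ⟩
    _ ≤ η ^ 3 * (3 * (2 ^ (p + 1) * μ ^ (p + 1))) := by gcongr
    _ = η ^ 2 * (48 * 2 ^ (p + 1) * layerFactor p) * (μ ^ (1 - p) * μ ^ (p + 1)) / 16 := by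
        rw [hη]
        ring
    _ = (η * μ / 4) ^ 2 := by
        rw [layerFactor, mul_inv_cancel₀ (by positivity), rpow_one_sub_mul_rpow_add_one hμ]
        ring

lemma le_sq_increment_of_doubling (hp : 1 ≤ p) (H : EnergyControl p ℓ α β m F A) {a b μ : ℝ}
    (ha : a ∈ Ioo α β) (hb : b ∈ Ioo α β) (hab : a ≤ b) (hμ : 0 < μ) (hma : m a = μ)
    (hmb : m b = 2 * μ) (hm : ∀ t ∈ Icc a b, μ ≤ m t) (hF : -μ ^ (p + 1) ≤ F a)
    (hℓ : 2 * μ ^ (1 - p) ≤ ℓ) :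
    layerFactor p / 32 * (μ ^ (p + 1)) ^ 2 ≤ (F b - F a) ^ 2 := by
  have hκ := layerFactor_pos p
  have hFab : F a ≤ F b := H.monotoneOn ha hb hab
  set κ := layerFactor p
  set y := μ ^ (1 - p) with hy
  set P := μ ^ (p + 1)
  have hy₀ : 0 < y := rpow_pos_of_pos hμ _
  have hyP : y * P = μ ^ 2 := rpow_one_sub_mul_rpow_add_one hμ p
  have hηℓ : κ * y ≤ ℓ :=
    (mul_le_mul_of_nonneg_right (layerFactor_le_two (by linarith)) hy₀.le).trans hℓ
  have mass_a := abs_le.1 (H.abs_mass_sub_trace_le hp ha hμ (by linarith) hF rfl hηℓ)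
  have mass_b := abs_le.1 (H.abs_mass_sub_trace_le hp hb hμ hmb.le (hF.trans hFab) rfl hηℓ)
  rw [hma] at mass_a
  rw [hmb] at mass_b
  have hmass : κ * y * μ / 2 ≤ A b (κ * y) - A a (κ * y) := by linarith [mass_a.2, mass_b.1]
  have hincrement := H.sq_mass_increment_le a ha b hb hab (κ * y) ⟨by positivity, hηℓ⟩
  have hdwell := H.dwell_time_le a ha b hb hab (2 * y) ⟨by positivity, hℓ⟩ μ hμ.le
    (by rw [hy, mul_assoc, rpow_one_sub_mul_rpow_sub_one hμ, mul_one]) hm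
  refine le_of_mul_le_mul_left ?_ (by positivity : 0 < 8 * κ * y ^ 4)
  calc 8 * κ * y ^ 4 * (κ / 32 * P ^ 2) = (κ * y * μ / 2) ^ 2 * μ ^ 2 := by
        linear_combination (κ ^ 2 * y ^ 2 / 4) * (y * P + μ ^ 2) * hyP
    _ ≤ κ * y * (b - a) * (F b - F a) * μ ^ 2 := by
        gcongr
        exact (pow_le_pow_left₀ (by positivity) hmass 2).trans hincrement
    _ = κ * y * (F b - F a) * ((b - a) * μ ^ 2) := by ring
    _ ≤ κ * y * (F b - F a) * ((2 * y) ^ 3 * (F b - F a)) := by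
        have := sub_nonneg.2 hFab
        gcongr
    _ = 8 * κ * y ^ 4 * (F b - F a) ^ 2 := by ring

lemma exists_mul_trace_rpow_le (hp : 1 < p) (hℓ : 0 < ℓ) (H : EnergyControl p ℓ α β m F A) {a : ℝ}
    (ha : a ∈ Ioo α β) :
    ∃ c > 0, ∀ᶠ M in atTop, ∀ t ∈ Ico a β, m t = M → c * M ^ (p + 1) ≤ F t := by
  have hκ := layerFactor_pos p
  set c := √(layerFactor p / 32)
  have : 0 < c := sqrt_pos.2 (by positivity)
  have half_atTop : Tendsto (fun M : ℝ => M / 2) atTop atTop :=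
    tendsto_id.atTop_div_const two_pos
  have pow_atTop : Tendsto (fun M : ℝ => (M / 2) ^ (p + 1)) atTop atTop :=
    (tendsto_rpow_atTop (by linarith)).comp half_atTop
  refine ⟨c / 2 / 2 ^ (p + 1), by positivity, ?_⟩
  filter_upwards [half_atTop.eventually_gt_atTop 0, half_atTop.eventually_ge_atTop (m a),
    half_atTop.eventually (eventually_two_mul_rpow_one_sub_le hp hℓ),
    pow_atTop.eventually_ge_atTop (-F a), pow_atTop.eventually_ge_atTop (-F a / (c / 2))]
    with M hμ hma hMℓ hFa hFa' t ht hmt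
  obtain ⟨μ, rfl⟩ : ∃ μ, M = 2 * μ := ⟨M / 2, by ring⟩
  rw [mul_div_cancel_left₀ μ two_ne_zero] at *
  have sub : Icc a t ⊆ Ioo α β := fun τ hτ => ⟨ha.1.trans_le hτ.1, hτ.2.trans_lt ht.2⟩
  obtain ⟨b, hb, hmb, hm⟩ := exists_eq_and_forall_le_of_continuousOn ht.1
    (H.continuousOn_trace.mono sub) hma (by linarith)
  have hFab : F a ≤ F b := H.monotoneOn ha (sub hb) hb.1
  have hFbt : F b ≤ F t := H.monotoneOn (sub hb) (sub ⟨ht.1, le_rfl⟩) hb.2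
  have hgap := H.le_sq_increment_of_doubling hp.le (sub hb) (sub ⟨ht.1, le_rfl⟩) hb.2 hμ hmb hmt
    hm (by linarith) hMℓ
  rw [← sq_sqrt (by positivity : 0 ≤ layerFactor p / 32), ← mul_pow] at hgap
  have hjump : c * μ ^ (p + 1) ≤ F t - F b := le_of_sq_le_sq hgap (sub_nonneg.2 hFbt)
  rw [div_le_iff₀' (by positivity)] at hFa'
  rw [mul_rpow zero_le_two hμ.le, ← mul_assoc, div_mul_cancel₀ _ (by positivity)]
  linarith

lemma two_mul_le_of_le (hp : 0 < p) (H : EnergyControl p ℓ α β m F A) {a b μ : ℝ}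
    (ha : a ∈ Ioo α β) (hb : b ∈ Ioo α β) (hμ : 0 < μ) (hFa : F a = μ ^ (p + 1))
    (hℓ : 2 * μ ^ (1 - p) ≤ ℓ) (hab : b = a + 8 * (μ ^ (1 - p)) ^ 2) : 2 * F a ≤ F b := by
  set y := μ ^ (1 - p) with hy
  have hy₀ : 0 < y := rpow_pos_of_pos hμ _
  have hyF : y * F a = μ ^ 2 := by rw [hFa, hy, rpow_one_sub_mul_rpow_add_one hμ]
  have hle : a ≤ b := by rw [hab]; linarith [pow_pos hy₀ 2]
  have htrace (t : ℝ) (ht : t ∈ Icc a b) : μ ≤ m t := by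
    have htI : t ∈ Ioo α β := ⟨ha.1.trans_le ht.1, ht.2.trans_lt hb.2⟩
    have hFt := (H.monotoneOn ha htI ht.1).trans (H.le_trace_rpow t htI)
    have hm₀ := H.trace_nonneg t htI
    rw [← rpow_le_rpow_iff hμ.le hm₀ (by linarith : 0 < p + 1), ← hFa]
    exact hFt.trans (div_le_self (by positivity) (by linarith))
  have hdwell := H.dwell_time_le a ha b hb hle (2 * y) ⟨by positivity, hℓ⟩ μ hμ.le
    (by rw [hy, mul_assoc, rpow_one_sub_mul_rpow_sub_one hμ, mul_one]) htrace
  have : 8 * y ^ 3 * F a ≤ 8 * y ^ 3 * (F b - F a) := by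
    calc 8 * y ^ 3 * F a = (b - a) * μ ^ 2 := by rw [← hyF, hab]; ring
      _ ≤ (2 * y) ^ 3 * (F b - F a) := hdwell
      _ = 8 * y ^ 3 * (F b - F a) := by ring
  linarith [le_of_mul_le_mul_left this (by positivity)]

lemma two_mul_le_of_step (hp : 0 < p) (H : EnergyControl p ℓ α β m F A) {a : ℝ}
    (ha : a ∈ Ioo α β) (hFa : 0 < F a) (hℓ : 2 * (F a ^ (1 / (p + 1))) ^ (1 - p) ≤ ℓ)
    (hb : a + 8 * (F a ^ (2 * (p - 1) / (p + 1)))⁻¹ ∈ Ioo α β) :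
    2 * F a ≤ F (a + 8 * (F a ^ (2 * (p - 1) / (p + 1)))⁻¹) := by
  refine H.two_mul_le_of_le hp ha hb (rpow_pos_of_pos hFa _) ?_ hℓ ?_
  · rw [← rpow_mul hFa.le, one_div_mul_cancel (by linarith), rpow_one]
  · rw [← rpow_neg hFa.le, ← rpow_mul hFa.le, ← rpow_natCast, ← rpow_mul hFa.le]
    congr 3
    push_cast
    ring

lemma eventually_sub_mul_rpow_le (hp : 1 < p) (hℓ : 0 < ℓ) (H : EnergyControl p ℓ α β m F A) :
    ∃ K, ∀ᶠ f in atTop, ∀ t ∈ Ioo α β, f ≤ F t →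
      (β - t) * F t ^ (2 * (p - 1) / (p + 1)) ≤ K := by
  set r := 2 * (p - 1) / (p + 1)
  have hr : 0 < r := div_pos (by linarith) (by linarith)
  have root_atTop : Tendsto (fun f : ℝ => f ^ (1 / (p + 1))) atTop atTop :=
    tendsto_rpow_atTop (div_pos one_pos (by linarith))
  have hlarge := (eventually_gt_atTop 0).and
    (root_atTop.eventually (eventually_two_mul_rpow_one_sub_le hp hℓ))
  refine ⟨8 / (1 - (2 ^ r)⁻¹), ?_⟩
  filter_upwards [eventually_forall_ge_atTop.2 hlarge] with f hf t ht hft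
  have hlim : Tendsto (fun T => (T - t) * F t ^ r) (𝓝[<] β) (𝓝 ((β - t) * F t ^ r)) :=
    (by fun_prop : Continuous fun T => (T - t) * F t ^ r).continuousAt.continuousWithinAt
  refine le_of_tendsto hlim ?_
  filter_upwards [Ioo_mem_nhdsLT ht.2] with T hT
  have sub : Icc t T ⊆ Ioo α β := fun τ hτ => ⟨ht.1.trans_le hτ.1, hτ.2.trans_lt hT.2⟩
  refine mul_rpow_le_of_growth hr (by norm_num) one_lt_two hT.1.le (hf _ hft).1
    (H.monotoneOn.mono sub) fun τ hτ hstep => ?_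
  obtain ⟨hFτ, hFℓ⟩ := hf _ (hft.trans (H.monotoneOn ht (sub hτ) hτ.1))
  have hstep₀ : 0 ≤ 8 * (F τ ^ r)⁻¹ := by positivity
  exact H.two_mul_le_of_step (by linarith) (sub hτ) hFτ hFℓ (sub ⟨by linarith [hτ.1], hstep⟩)

lemma exists_sub_rpow_mul_trace_le (hp : 1 < p) (hℓ : 0 < ℓ) (H : EnergyControl p ℓ α β m F A)
    {a : ℝ} (ha : a ∈ Ioo α β) :
    ∃ C, ∀ t ∈ Ico a β, (β - t) ^ (1 / (2 * (p - 1))) * m t ≤ C := by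
  set r := 2 * (p - 1) / (p + 1) with hr
  have : 0 < r := div_pos (by linarith) (by linarith)
  have hexp : 0 < 1 / (2 * (p - 1)) := one_div_pos.2 (by linarith)
  obtain ⟨c, hc, hcF⟩ := H.exists_mul_trace_rpow_le hp hℓ ha
  obtain ⟨K, hK⟩ := H.eventually_sub_mul_rpow_le hp hℓ
  have pow_atTop : Tendsto (fun M : ℝ => c * M ^ (p + 1)) atTop atTop :=
    (tendsto_rpow_atTop (by linarith)).const_mul_atTop hc
  obtain ⟨M₀, hM₀⟩ := eventually_atTop.1 (hcF.and (pow_atTop.eventually hK))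
  refine ⟨max ((β - a) ^ (1 / (2 * (p - 1))) * |M₀|) ((K / c ^ r) ^ (1 / (2 * (p - 1)))),
    fun t ht => ?_⟩
  have htI : t ∈ Ioo α β := ⟨ha.1.trans_le ht.1, ht.2⟩
  have hm := H.trace_nonneg t htI
  have hβt : 0 ≤ β - t := sub_nonneg.2 ht.2.le
  rcases lt_or_ge (m t) M₀ with hlt | hge
  · refine le_max_of_le_left (mul_le_mul (rpow_le_rpow hβt (by linarith [ht.1]) hexp.le)
      (hlt.le.trans (le_abs_self _)) hm (rpow_nonneg (by linarith [ht.1]) _))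
  · refine le_max_of_le_right ?_
    obtain ⟨hcF, hK⟩ := hM₀ _ hge
    have hFt := hcF t ht rfl
    have hpow : (c * m t ^ (p + 1)) ^ r = c ^ r * m t ^ (2 * (p - 1)) := by
      rw [mul_rpow hc.le (by positivity), ← rpow_mul hm, hr, mul_div_cancel₀ _ (by linarith)]
    have hbound : (β - t) * m t ^ (2 * (p - 1)) ≤ K / c ^ r := by
      rw [le_div_iff₀ (by positivity)]
      calc (β - t) * m t ^ (2 * (p - 1)) * c ^ r = (β - t) * (c * m t ^ (p + 1)) ^ r := by
            rw [hpow]; ring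
        _ ≤ (β - t) * F t ^ r := by gcongr
        _ ≤ K := hK t htI hFt
    have hroot := rpow_le_rpow (by positivity) hbound hexp.le
    rwa [mul_rpow hβt (by positivity), ← rpow_mul hm, mul_one_div_cancel (by linarith),
      rpow_one] at hroot

end EnergyControl

namespace EnergyControl

variable {p ℓ α β : ℝ} {m F : ℝ → ℝ} {A : ℝ → ℝ → ℝ}

lemma congr {ℓ' : ℝ} {m' F' : ℝ → ℝ} {A' : ℝ → ℝ → ℝ} (H : EnergyControl p ℓ α β m F A)
    (hℓ : ℓ' ≤ ℓ) (hm : EqOn m' m (Ioo α β)) (hF : EqOn F' F (Ioo α β))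
    (hA : ∀ t ∈ Ioo α β, EqOn (A' t) (A t) (Ioc 0 ℓ')) : EnergyControl p ℓ' α β m' F' A' where
  continuousOn_trace := H.continuousOn_trace.congr hm
  trace_nonneg t ht := hm ht ▸ H.trace_nonneg t ht
  monotoneOn := H.monotoneOn.congr hF.symm
  le_trace_rpow t ht := by
    rw [hm ht, hF ht]
    exact H.le_trace_rpow t ht
  sq_mass_sub_trace_le t ht η hη := by
    rw [hA t ht hη, hm ht, hF ht]
    exact H.sq_mass_sub_trace_le t ht η ⟨hη.1, hη.2.trans hℓ⟩
  sq_mass_increment_le a ha b hb hab η hη := by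
    rw [hA a ha hη, hA b hb hη, hF ha, hF hb]
    exact H.sq_mass_increment_le a ha b hb hab η ⟨hη.1, hη.2.trans hℓ⟩
  dwell_time_le a ha b hb hab x hx μ hμ hxμ hm' := by
    rw [hF ha, hF hb]
    exact H.dwell_time_le a ha b hb hab x ⟨hx.1, hx.2.trans hℓ⟩ μ hμ hxμ fun t ht =>
      hm ⟨ha.1.trans_le ht.1, ht.2.trans_lt hb.2⟩ ▸ hm' t ht

lemma of_forall_subinterval
    (H : ∀ a b, α < a → a < b → b < β → EnergyControl p ℓ a b m F A) :
    EnergyControl p ℓ α β m F A := by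
  have cover {a b : ℝ} (ha : α < a) (hab : a ≤ b) (hb : b < β) :
      ∃ a' b', a ∈ Ioo a' b' ∧ b ∈ Ioo a' b' ∧ EnergyControl p ℓ a' b' m F A := by
    obtain ⟨a', ha'⟩ := exists_between ha
    obtain ⟨b', hb'⟩ := exists_between hb
    exact ⟨a', b', ⟨ha'.2, hab.trans_lt hb'.1⟩, ⟨ha'.2.trans_le hab, hb'.1⟩,
      H a' b' ha'.1 (ha'.2.trans_le (hab.trans hb'.1.le)) hb'.2⟩
  refine ⟨fun t ht => ?_, fun t ht => ?_, fun a ha b hb hab => ?_, fun t ht => ?_,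
    fun t ht => ?_, fun a ha b hb hab => ?_, fun a ha b hb hab => ?_⟩
  · obtain ⟨a', b', ht', -, H'⟩ := cover ht.1 le_rfl ht.2
    exact (H'.continuousOn_trace.continuousAt (isOpen_Ioo.mem_nhds ht')).continuousWithinAt
  · obtain ⟨a', b', ht', -, H'⟩ := cover ht.1 le_rfl ht.2
    exact H'.trace_nonneg t ht'
  · obtain ⟨a', b', ha', hb', H'⟩ := cover ha.1 hab hb.2
    exact H'.monotoneOn ha' hb' hab
  · obtain ⟨a', b', ht', -, H'⟩ := cover ht.1 le_rfl ht.2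
    exact H'.le_trace_rpow t ht'
  · obtain ⟨a', b', ht', -, H'⟩ := cover ht.1 le_rfl ht.2
    exact H'.sq_mass_sub_trace_le t ht'
  · obtain ⟨a', b', ha', hb', H'⟩ := cover ha.1 hab hb.2
    exact H'.sq_mass_increment_le a ha' b hb' hab
  · obtain ⟨a', b', ha', hb', H'⟩ := cover ha.1 hab hb.2
    exact H'.dwell_time_le a ha' b hb' hab

end EnergyControl

/-! ### Solutions of the Stefan problem -/

/-- The point of `[a, b]` closest to `t`; composition with it extends a solution to all times and
positions. -/
def clampIcc (a b t : ℝ) : ℝ := max a (min t b)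

lemma monotone_clampIcc (a b : ℝ) : Monotone (clampIcc a b) := fun _ _ h =>
  max_le_max_left a (min_le_min_right b h)

lemma clampIcc_mem {a b : ℝ} (hab : a ≤ b) (t : ℝ) : clampIcc a b t ∈ Icc a b :=
  ⟨le_max_left _ _, max_le hab (min_le_right _ _)⟩

lemma clampIcc_of_mem {a b t : ℝ} (ht : t ∈ Icc a b) : clampIcc a b t = t := by
  rw [clampIcc, min_eq_left ht.2, max_eq_right ht.1]

lemma clampIcc_eventuallyEq {a b t : ℝ} (ht : t ∈ Ioo a b) : clampIcc a b =ᶠ[𝓝 t] id := by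
  filter_upwards [Icc_mem_nhds ht.1 ht.2] with τ hτ using clampIcc_of_mem hτ

namespace IsSolOn

variable {p s₀ T : ℝ} {φ s : ℝ → ℝ} {u : ℝ → ℝ → ℝ}

lemma continuousOn_deriv_slice (H : IsSolOn p s₀ φ T s u) {t : ℝ} (ht : t ∈ Ioc 0 T) :
    ContinuousOn (deriv (u t)) (Icc 0 (s t)) :=
  H.ux_cont.comp (f := fun x : ℝ => (t, x)) (by fun_prop) fun _ hx => ⟨ht, hx⟩

lemma continuousOn_slice (H : IsSolOn p s₀ φ T s u) {t : ℝ} (ht : t ∈ Icc 0 T) :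
    ContinuousOn (u t) (Icc 0 (s t)) :=
  H.u_cont.comp (f := fun x : ℝ => (t, x)) (by fun_prop) fun _ hx => ⟨ht, hx⟩

lemma tendsto_deriv_slice (H : IsSolOn p s₀ φ T s u) {t : ℝ} (ht : t ∈ Ioc 0 T) :
    Tendsto (deriv (u t)) (𝓝[<] s t) (𝓝 (deriv (u t) (s t))) := by
  have hs := H.s_pos t (Ioc_subset_Icc_self ht)
  rw [← nhdsWithin_Ioo_eq_nhdsLT hs]
  exact (H.continuousOn_deriv_slice ht _ (right_mem_Icc.2 hs.le)).mono Ioo_subset_Icc_self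

lemma deriv_free_nonpos (H : IsSolOn p s₀ φ T s u) {t : ℝ} (ht : t ∈ Ioc 0 T) :
    deriv (u t) (s t) ≤ 0 := by
  have ht' := Ioc_subset_Icc_self ht
  exact le_zero_of_tendsto_deriv_of_le_left (H.s_pos t ht') (H.continuousOn_slice ht')
    (fun x hx => (H.ux_diff t ht x hx).hasDerivAt) (H.tendsto_deriv_slice ht)
    fun x hx => (H.bc_free t ht).trans_le (H.u_nonneg t ht' x (Ioo_subset_Icc_self hx))

lemma monotoneOn_s (H : IsSolOn p s₀ φ T s u) : MonotoneOn s (Icc 0 T) := by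
  refine monotoneOn_of_deriv_nonneg (convex_Icc 0 T) H.s_cont (fun t ht => ?_) fun t ht => ?_
  all_goals
    rw [interior_Icc] at ht
    have ht' := Ioo_subset_Ioc_self ht
  · exact (H.s_diff t ht').differentiableWithinAt
  · rw [H.stefan t ht']
    exact neg_nonneg.2 (H.deriv_free_nonpos ht')

lemma le_s (H : IsSolOn p s₀ φ T s u) {t : ℝ} (ht : t ∈ Icc 0 T) : s₀ ≤ s t := by
  rw [← H.init_s]
  exact H.monotoneOn_s (left_mem_Icc.2 H.T_pos.le) ht ht.1

lemma integral_sub_eq_integral_deriv_sub (H : IsSolOn p s₀ φ T s u) {t₁ t₂ x y : ℝ} (h₁ : 0 < t₁)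
    (h₁₂ : t₁ ≤ t₂) (h₂ : t₂ ≤ T) (hx : x ∈ Ioo 0 (s t₁)) (hy : y ∈ Ioo 0 (s t₁)) :
    ∫ ξ in x..y, (u t₂ ξ - u t₁ ξ) = ∫ τ in t₁..t₂, (deriv (u τ) y - deriv (u τ) x) := by
  have time_mem {τ : ℝ} (hτ : τ ∈ uIcc t₁ t₂) : τ ∈ Ioc 0 T := by
    rw [uIcc_of_le h₁₂] at hτ
    exact ⟨h₁.trans_le hτ.1, hτ.2.trans h₂⟩
  have space_mem {τ ξ : ℝ} (hτ : τ ∈ uIcc t₁ t₂) (hξ : ξ ∈ uIcc x y) : ξ ∈ Ioo 0 (s τ) := by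
    have hξ' := ordConnected_Ioo.uIcc_subset hx hy hξ
    refine ⟨hξ'.1, hξ'.2.trans_le (H.monotoneOn_s ⟨h₁.le, h₁₂.trans h₂⟩
      (Ioc_subset_Icc_self (time_mem hτ)) ?_)⟩
    exact (uIcc_of_le h₁₂ ▸ hτ).1
  have hcont : ContinuousOn ↿(fun ξ τ => deriv (deriv (u τ)) ξ) (uIcc x y ×ˢ uIcc t₁ t₂) :=
    H.uxx_cont.comp (f := fun z : ℝ × ℝ => (z.2, z.1)) (by fun_prop)
      fun z hz => ⟨time_mem hz.2, space_mem hz.2 hz.1⟩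
  calc ∫ ξ in x..y, (u t₂ ξ - u t₁ ξ)
      = ∫ ξ in x..y, ∫ τ in t₁..t₂, deriv (deriv (u τ)) ξ := by
        refine intervalIntegral.integral_congr fun ξ hξ => ?_
        refine (intervalIntegral.integral_eq_sub_of_hasDerivAt (f := fun τ => u τ ξ)
          (fun τ hτ => ?_) (ContinuousOn.intervalIntegrable ?_)).symm
        · rw [← H.heat τ (time_mem hτ) ξ (space_mem hτ hξ)]
          exact (H.ut_diff τ (time_mem hτ) ξ (space_mem hτ hξ)).hasDerivAt
        · exact hcont.comp (f := fun τ : ℝ => (ξ, τ)) (by fun_prop) fun τ hτ => ⟨hξ, hτ⟩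
    _ = ∫ τ in t₁..t₂, ∫ ξ in x..y, deriv (deriv (u τ)) ξ :=
        integral_integral_swap_of_continuousOn hcont
    _ = ∫ τ in t₁..t₂, (deriv (u τ) y - deriv (u τ) x) := by
        refine intervalIntegral.integral_congr fun τ hτ => ?_
        exact intervalIntegral.integral_eq_sub_of_hasDerivAt
          (fun ξ hξ => (H.uxx_diff τ (time_mem hτ) ξ (space_mem hτ hξ)).hasDerivAt)
          (hcont.comp (f := fun ξ : ℝ => (ξ, τ)) (by fun_prop)
            fun ξ hξ => ⟨hξ, hτ⟩).intervalIntegrable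

lemma conservation_clampIcc (H : IsSolOn p s₀ φ T s u) {α t₁ t₂ x y : ℝ} (hα : 0 < α)
    (h₁ : α ≤ t₁) (h₁₂ : t₁ ≤ t₂) (h₂ : t₂ ≤ T) (hx : x ∈ Ioo 0 (s t₁)) (hy : y ∈ Ioo 0 (s t₁)) :
    ∫ ξ in x..y, (u (clampIcc α T t₂) (clampIcc 0 (s (clampIcc α T t₂)) ξ) -
        u (clampIcc α T t₁) (clampIcc 0 (s (clampIcc α T t₁)) ξ)) =
      ∫ τ in t₁..t₂, (deriv (u (clampIcc α T τ)) (clampIcc 0 (s (clampIcc α T τ)) y) -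
        deriv (u (clampIcc α T τ)) (clampIcc 0 (s (clampIcc α T τ)) x)) := by
  have clamp_time {τ : ℝ} (hτ : τ ∈ Icc t₁ t₂) : clampIcc α T τ = τ :=
    clampIcc_of_mem ⟨h₁.trans hτ.1, hτ.2.trans h₂⟩
  have clamp_space {τ ξ : ℝ} (hτ : τ ∈ Icc t₁ t₂) (hξ : ξ ∈ Ioo 0 (s t₁)) :
      clampIcc 0 (s τ) ξ = ξ := by
    have hs := H.monotoneOn_s ⟨hα.le.trans h₁, h₁₂.trans h₂⟩
      ⟨hα.le.trans (h₁.trans hτ.1), hτ.2.trans h₂⟩ hτ.1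
    exact clampIcc_of_mem ⟨hξ.1.le, hξ.2.le.trans hs⟩
  refine Eq.trans ?_ ((H.integral_sub_eq_integral_deriv_sub (hα.trans_le h₁) h₁₂ h₂ hx hy).trans ?_)
  · refine intervalIntegral.integral_congr fun ξ hξ => ?_
    have hξ' := ordConnected_Ioo.uIcc_subset hx hy hξ
    have left_mem := left_mem_Icc.2 h₁₂
    have right_mem := right_mem_Icc.2 h₁₂
    simp only [clamp_time left_mem, clamp_time right_mem, clamp_space left_mem hξ',
      clamp_space right_mem hξ']
  · refine intervalIntegral.integral_congr fun τ hτ => ?_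
    rw [uIcc_of_le h₁₂] at hτ
    simp only [clamp_time hτ, clamp_space hτ hx, clamp_space hτ hy]

lemma isExtendedSol (H : IsSolOn p s₀ φ T s u) {α : ℝ} (hα : 0 < α) (hαT : α < T) :
    IsExtendedSol p α T (fun t => s (clampIcc α T t))
      (fun t x => u (clampIcc α T t) (clampIcc 0 (s (clampIcc α T t)) x))
      fun t x => deriv (u (clampIcc α T t)) (clampIcc 0 (s (clampIcc α T t)) x) := by
  have time_mem (t : ℝ) : clampIcc α T t ∈ Ioc 0 T :=
    ⟨hα.trans_le (clampIcc_mem hαT.le t).1, (clampIcc_mem hαT.le t).2⟩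
  have time_mem' (t : ℝ) : clampIcc α T t ∈ Icc 0 T := Ioc_subset_Icc_self (time_mem t)
  have s_pos (t : ℝ) : 0 < s (clampIcc α T t) := H.s_pos _ (time_mem' t)
  have hs : Continuous fun t => s (clampIcc α T t) :=
    H.s_cont.comp_continuous (by unfold clampIcc; fun_prop) time_mem'
  have hclamp : Continuous fun z : ℝ × ℝ =>
      (clampIcc α T z.1, clampIcc 0 (s (clampIcc α T z.1)) z.2) := by
    refine Continuous.prodMk ?_ (continuous_const.max (continuous_snd.min ?_))
    · unfold clampIcc
      fun_prop
    · exact hs.comp continuous_fst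
  have clamp_s (t : ℝ) : clampIcc 0 (s (clampIcc α T t)) (s (clampIcc α T t)) =
      s (clampIcc α T t) := clampIcc_of_mem (right_mem_Icc.2 (s_pos t).le)
  have clamp_zero (t : ℝ) : clampIcc 0 (s (clampIcc α T t)) 0 = 0 :=
    clampIcc_of_mem (left_mem_Icc.2 (s_pos t).le)
  refine ⟨hs, s_pos, fun a b hab => H.monotoneOn_s (time_mem' a) (time_mem' b)
    (monotone_clampIcc _ _ hab), fun t ht => ?_, ?_, ?_, fun t x hx => ?_,
    fun t₁ ht₁ t₂ ht₂ h₁₂ x hx y hy => ?_, fun t => ?_, fun t => ?_, fun t x => ?_⟩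
  · rw [clamp_s, ← H.stefan _ (time_mem t), clampIcc_of_mem (Ioo_subset_Icc_self ht)]
    exact (H.s_diff t ⟨hα.trans ht.1, ht.2.le⟩).hasDerivAt.congr_of_eventuallyEq
      ((clampIcc_eventuallyEq ht).fun_comp s)
  · exact H.u_cont.comp_continuous hclamp fun z => ⟨time_mem' _, clampIcc_mem (s_pos _).le _⟩
  · exact H.ux_cont.comp_continuous hclamp fun z => ⟨time_mem _, clampIcc_mem (s_pos _).le _⟩
  · rw [clampIcc_of_mem (Ioo_subset_Icc_self hx)]
    exact (H.ux_diff _ (time_mem t) x hx).hasDerivAt.congr_of_eventuallyEq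
      ((clampIcc_eventuallyEq hx).fun_comp _)
  · rw [clampIcc_of_mem ht₁] at hx hy
    exact H.conservation_clampIcc hα ht₁.1 h₁₂ ht₂.2 hx hy
  · rw [clamp_zero]
    exact H.bc_zero _ (time_mem t)
  · rw [clamp_s]
    exact H.bc_free _ (time_mem t)
  · exact H.u_nonneg _ (time_mem' t) _ (clampIcc_mem (s_pos t).le x)

lemma energy_clampIcc (H : IsSolOn p s₀ φ T s u) {α t : ℝ} (hα : 0 < α) (ht : t ∈ Icc α T) :
    energy p (fun t => s (clampIcc α T t))
      (fun t x => u (clampIcc α T t) (clampIcc 0 (s (clampIcc α T t)) x)) t = energy p s u t := by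
  have hs := H.s_pos t ⟨hα.le.trans ht.1, ht.2⟩
  simp only [energy, clampIcc_of_mem ht, clampIcc_of_mem (left_mem_Icc.2 hs.le)]
  congr 2
  refine intervalIntegral.integral_congr_Ioo_of_le hs.le fun x hx => ?_
  exact congrArg (· ^ 2) ((clampIcc_eventuallyEq hx).fun_comp (u t)).deriv_eq

lemma energyControl (hp : 1 ≤ p) (H : IsSolOn p s₀ φ T s u) {α : ℝ} (hα : 0 < α) (hαT : α < T) :
    EnergyControl p s₀ α T (fun t => u t 0) (fun t => -energy p s u t)
      fun t η => ∫ x in (0 : ℝ)..η, u t x := by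
  have time_mem {t : ℝ} (ht : t ∈ Ioo α T) : t ∈ Icc 0 T := ⟨(hα.trans ht.1).le, ht.2.le⟩
  refine ((H.isExtendedSol hα hαT).energyControl hp).congr ?_ (fun t ht => ?_) (fun t ht => ?_)
    fun t ht η hη => ?_
  · rw [clampIcc_of_mem (left_mem_Icc.2 hαT.le)]
    exact H.le_s ⟨hα.le, hαT.le⟩
  · simp only [clampIcc_of_mem (Ioo_subset_Icc_self ht),
      clampIcc_of_mem (left_mem_Icc.2 (H.s_pos t (time_mem ht)).le)]
  · simp only [H.energy_clampIcc hα (Ioo_subset_Icc_self ht)]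
  · refine intervalIntegral.integral_congr fun x hx => ?_
    rw [uIcc_of_le hη.1.le] at hx
    simp only [clampIcc_of_mem (Ioo_subset_Icc_self ht),
      clampIcc_of_mem ⟨hx.1, hx.2.trans (hη.2.trans (H.le_s (time_mem ht)))⟩]

end IsSolOn

/-- `(s, u)` is a solution of (P) on the time interval `(0, T)` with `T` finite. -/
def IsSolBefore (p s₀ : ℝ) (φ : ℝ → ℝ) (T : ℝ) (s : ℝ → ℝ) (u : ℝ → ℝ → ℝ) : Prop :=
  ∀ T', 0 < T' → T' < T → IsSolOn p s₀ φ T' s u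

namespace IsSolBefore

variable {p s₀ T : ℝ} {φ s : ℝ → ℝ} {u : ℝ → ℝ → ℝ}

lemma s₀_pos (H : IsSolBefore p s₀ φ T s u) (hT : 0 < T) : 0 < s₀ := by
  have H' := H (T / 2) (half_pos hT) (half_lt_self hT)
  exact H'.init_s ▸ H'.s_pos 0 (left_mem_Icc.2 H'.T_pos.le)

lemma exists_sub_rpow_mul_le (hp : 1 < p) (H : IsSolBefore p s₀ φ T s u) {a : ℝ}
    (ha : a ∈ Ioo 0 T) :
    ∃ C, ∀ t ∈ Ico a T, (T - t) ^ (1 / (2 * (p - 1))) * u t 0 ≤ C :=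
  (EnergyControl.of_forall_subinterval fun _ T' hα hαT' hT' =>
    (H T' (hα.trans hαT') hT').energyControl hp.le hα hαT').exists_sub_rpow_mul_trace_le hp
    (H.s₀_pos (ha.1.trans ha.2)) ha

end IsSolBefore

/-! ### Comparison below the free boundary -/

/-- The points `(t, x)` with `t ∈ [t₀, t₁]` that lie between `x = δ` and the graph of `s`. -/
def regionBelow (s : ℝ → ℝ) (δ t₀ t₁ : ℝ) : Set (ℝ × ℝ) :=
  {q | q.1 ∈ Icc t₀ t₁ ∧ q.2 ∈ Icc δ (s q.1)}

section MinimumPrinciple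

variable {s : ℝ → ℝ} {δ t₀ t₁ : ℝ} {z : ℝ → ℝ → ℝ}

lemma isCompact_regionBelow (hs : ContinuousOn s (Icc t₀ t₁)) :
    IsCompact (regionBelow s δ t₀ t₁) := by
  obtain ⟨M, hM⟩ := isCompact_Icc.bddAbove_image hs
  have hgap : ContinuousOn (fun q : ℝ × ℝ => s q.1 - q.2) (Icc t₀ t₁ ×ˢ Icc δ M) :=
    (hs.comp continuousOn_fst fun q hq => hq.1).sub continuousOn_snd
  have hclosed := hgap.preimage_isClosed_of_isClosed (isClosed_Icc.prod isClosed_Icc)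
    (isClosed_Ici (a := 0))
  convert (isCompact_Icc.prod isCompact_Icc).of_isClosed_subset hclosed inter_subset_left
  ext ⟨t, x⟩
  simp only [regionBelow, mem_ofPred_eq, mem_inter_iff, mem_prod, mem_preimage, mem_Ici, sub_nonneg]
  exact ⟨fun h => ⟨⟨h.1, h.2.1, h.2.2.trans (hM (mem_image_of_mem s h.1))⟩, h.2.2⟩,
    fun h => ⟨h.1.1, h.1.2.1, h.2⟩⟩

lemma deriv_time_nonpos_of_isMinOn (hs : ContinuousOn s (Icc t₀ t₁)) {a b : ℝ}
    (ha : a ∈ Ioc t₀ t₁) (hb : b ∈ Ioo δ (s a)) (hz : DifferentiableAt ℝ (fun τ => z τ b) a)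
    (hmin : IsMinOn ↿z (regionBelow s δ t₀ t₁) (a, b)) : deriv (fun τ => z τ b) a ≤ 0 := by
  refine deriv_nonpos_of_le_left hz.hasDerivAt.hasDerivWithinAt ?_
  have hs_left : Tendsto s (𝓝[<] a) (𝓝 (s a)) := by
    rw [← nhdsWithin_Ioo_eq_nhdsLT ha.1]
    exact (hs a (Ioc_subset_Icc_self ha)).mono (Ioo_subset_Icc_self.trans
      (Icc_subset_Icc le_rfl ha.2))
  filter_upwards [hs_left.eventually_const_lt hb.2, Ioo_mem_nhdsLT ha.1] with τ hτs hτ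
  exact hmin (show (τ, b) ∈ regionBelow s δ t₀ t₁ from
    ⟨⟨hτ.1.le, hτ.2.le.trans ha.2⟩, hb.1.le, hτs.le⟩)

lemma deriv_deriv_space_nonneg_of_isMinOn (hz : ContinuousOn ↿z (regionBelow s δ t₀ t₁)) {a b : ℝ}
    (ha : a ∈ Icc t₀ t₁) (hb : b ∈ Ioo δ (s a))
    (hmin : IsMinOn ↿z (regionBelow s δ t₀ t₁) (a, b)) : 0 ≤ deriv (deriv (z a)) b := by
  have hnhds : Icc δ (s a) ∈ 𝓝 b := Icc_mem_nhds hb.1 hb.2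
  have maps : MapsTo (fun x => (a, x)) (Icc δ (s a)) (regionBelow s δ t₀ t₁) :=
    fun x hx => ⟨ha, hx⟩
  refine deriv_deriv_nonneg_of_isLocalMin ?_ ?_
  · filter_upwards [hnhds] with x hx using hmin (maps hx)
  · exact (hz.comp (by fun_prop) maps).continuousAt hnhds

lemma nonneg_of_deriv_deriv_lt (hs : ContinuousOn s (Icc t₀ t₁))
    (hz : ContinuousOn ↿z (regionBelow s δ t₀ t₁))
    (hdiff : ∀ t ∈ Ioc t₀ t₁, ∀ x ∈ Ioo δ (s t), DifferentiableAt ℝ (fun τ => z τ x) t)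
    (hheat : ∀ t ∈ Ioc t₀ t₁, ∀ x ∈ Ioo δ (s t),
      deriv (deriv (z t)) x < deriv (fun τ => z τ x) t)
    (hinit : ∀ x ∈ Icc δ (s t₀), 0 ≤ z t₀ x) (hleft : ∀ t ∈ Icc t₀ t₁, 0 ≤ z t δ)
    (hright : ∀ t ∈ Icc t₀ t₁, 0 ≤ z t (s t)) :
    ∀ q ∈ regionBelow s δ t₀ t₁, 0 ≤ z q.1 q.2 := by
  intro q hq
  obtain ⟨⟨a, b⟩, hab, hmin⟩ := (isCompact_regionBelow hs).exists_isMinOn ⟨q, hq⟩ hz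
  obtain ⟨ha, hb⟩ : a ∈ Icc t₀ t₁ ∧ b ∈ Icc δ (s a) := hab
  refine le_trans ?_ (hmin hq)
  change 0 ≤ z a b
  rcases ha.1.eq_or_lt with rfl | ha₀
  · exact hinit b hb
  rcases hb.1.eq_or_lt with rfl | hbδ
  · exact hleft a ha
  rcases hb.2.eq_or_lt with rfl | hbs
  · exact hright a ha
  have htime := deriv_time_nonpos_of_isMinOn hs ⟨ha₀, ha.2⟩ ⟨hbδ, hbs⟩
    (hdiff a ⟨ha₀, ha.2⟩ b ⟨hbδ, hbs⟩) hmin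
  have hspace := deriv_deriv_space_nonneg_of_isMinOn hz ha ⟨hbδ, hbs⟩ hmin
  linarith [hheat a ⟨ha₀, ha.2⟩ b ⟨hbδ, hbs⟩]

lemma nonneg_of_deriv_deriv_le (hs : ContinuousOn s (Icc t₀ t₁))
    (hz : ContinuousOn ↿z (regionBelow s δ t₀ t₁))
    (hdiff : ∀ t ∈ Ioc t₀ t₁, ∀ x ∈ Ioo δ (s t), DifferentiableAt ℝ (fun τ => z τ x) t)
    (hheat : ∀ t ∈ Ioc t₀ t₁, ∀ x ∈ Ioo δ (s t),
      deriv (deriv (z t)) x ≤ deriv (fun τ => z τ x) t)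
    (hinit : ∀ x ∈ Icc δ (s t₀), 0 ≤ z t₀ x) (hleft : ∀ t ∈ Icc t₀ t₁, 0 ≤ z t δ)
    (hright : ∀ t ∈ Icc t₀ t₁, 0 ≤ z t (s t)) :
    ∀ q ∈ regionBelow s δ t₀ t₁, 0 ≤ z q.1 q.2 := by
  intro q hq
  have hpert {ε t : ℝ} (hε : 0 < ε) (ht : t ∈ Icc t₀ t₁) : 0 ≤ ε * (t - t₀) :=
    mul_nonneg hε.le (sub_nonneg.2 ht.1)
  have hlim : Tendsto (fun ε : ℝ => z q.1 q.2 + ε * (q.1 - t₀)) (𝓝[>] 0)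
      (𝓝 (z q.1 q.2 + 0 * (q.1 - t₀))) :=
    (by fun_prop : Continuous fun ε : ℝ => z q.1 q.2 + ε * (q.1 - t₀)).continuousWithinAt
  rw [zero_mul, add_zero] at hlim
  refine ge_of_tendsto hlim ?_
  filter_upwards [self_mem_nhdsWithin] with ε (hε : 0 < ε)
  refine nonneg_of_deriv_deriv_lt (z := fun t x => z t x + ε * (t - t₀)) hs
    (hz.add (by fun_prop)) (fun t ht x hx => (hdiff t ht x hx).add (by fun_prop))
    (fun t ht x hx => ?_) (fun x hx => by simpa using hinit x hx)
    (fun t ht => add_nonneg (hleft t ht) (hpert hε ht))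
    (fun t ht => add_nonneg (hright t ht) (hpert hε ht)) q hq
  have htime : deriv (fun τ => z τ x + ε * (τ - t₀)) t = deriv (fun τ => z τ x) t + ε := by
    rw [deriv_fun_add (hdiff t ht x hx) (by fun_prop), deriv_const_mul_field, deriv_sub_const_fun,
      deriv_id'', mul_one]
  rw [htime, deriv_add_const']
  linarith [hheat t ht x hx]

end MinimumPrinciple

/-- `v` is a classical supersolution of the heat equation on `regionBelow s δ t₀ t₁`, nonnegative
on the free boundary. -/
structure IsSupersolution (s : ℝ → ℝ) (δ t₀ t₁ : ℝ) (v : ℝ → ℝ → ℝ) : Prop where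
  continuousOn : ContinuousOn ↿v (regionBelow s δ t₀ t₁)
  differentiableAt_time : ∀ t ∈ Ioc t₀ t₁, ∀ x ∈ Ioo δ (s t), DifferentiableAt ℝ (fun τ => v τ x) t
  differentiableAt_space : ∀ t ∈ Ioc t₀ t₁, ∀ x ∈ Ioo δ (s t), DifferentiableAt ℝ (v t) x
  differentiableAt_deriv : ∀ t ∈ Ioc t₀ t₁, ∀ x ∈ Ioo δ (s t), DifferentiableAt ℝ (deriv (v t)) x
  deriv_deriv_le : ∀ t ∈ Ioc t₀ t₁, ∀ x ∈ Ioo δ (s t),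
    deriv (deriv (v t)) x ≤ deriv (fun τ => v τ x) t
  free_nonneg : ∀ t ∈ Icc t₀ t₁, 0 ≤ v t (s t)

lemma IsSupersolution.const_mul {s : ℝ → ℝ} {δ t₀ t₁ A : ℝ} {v : ℝ → ℝ → ℝ}
    (hv : IsSupersolution s δ t₀ t₁ v) (hA : 0 ≤ A) :
    IsSupersolution s δ t₀ t₁ fun t x => A * v t x where
  continuousOn := continuousOn_const.mul hv.continuousOn
  differentiableAt_time t ht x hx := (hv.differentiableAt_time t ht x hx).const_mul A
  differentiableAt_space t ht x hx := (hv.differentiableAt_space t ht x hx).const_mul A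
  differentiableAt_deriv t ht x hx := by
    rw [deriv_const_mul_field']
    exact (hv.differentiableAt_deriv t ht x hx).const_mul A
  deriv_deriv_le t ht x hx := by
    simp only [deriv_const_mul_field', deriv_const_mul_field]
    exact mul_le_mul_of_nonneg_left (hv.deriv_deriv_le t ht x hx) hA
  free_nonneg t ht := mul_nonneg hA (hv.free_nonneg t ht)

lemma IsSolOn.le_of_isSupersolution {p s₀ T δ t₀ t₁ : ℝ} {φ s : ℝ → ℝ} {u v : ℝ → ℝ → ℝ}
    (H : IsSolOn p s₀ φ T s u) (h₀ : 0 < t₀) (h₁ : t₁ ≤ T) (hδ : 0 ≤ δ)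
    (hv : IsSupersolution s δ t₀ t₁ v) (hinit : ∀ x ∈ Icc δ (s t₀), u t₀ x ≤ v t₀ x)
    (hleft : ∀ t ∈ Icc t₀ t₁, u t δ ≤ v t δ) :
    ∀ t ∈ Icc t₀ t₁, ∀ x ∈ Icc δ (s t), u t x ≤ v t x := by
  have time_mem {t : ℝ} (ht : t ∈ Icc t₀ t₁) : t ∈ Ioc 0 T := ⟨h₀.trans_le ht.1, ht.2.trans h₁⟩
  have region_sub : regionBelow s δ t₀ t₁ ⊆ {q | q.1 ∈ Icc 0 T ∧ q.2 ∈ Icc 0 (s q.1)} :=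
    fun q hq => ⟨Ioc_subset_Icc_self (time_mem hq.1), hδ.trans hq.2.1, hq.2.2⟩
  have space_mem {t x : ℝ} (hx : x ∈ Ioo δ (s t)) : x ∈ Ioo 0 (s t) := ⟨hδ.trans_lt hx.1, hx.2⟩
  intro t ht x hx
  refine sub_nonneg.1 (nonneg_of_deriv_deriv_le (z := fun t x => v t x - u t x)
    (H.s_cont.mono fun t ht => Ioc_subset_Icc_self (time_mem ht))
    (hv.continuousOn.sub (H.u_cont.mono region_sub)) (fun t ht x hx => ?_) (fun t ht x hx => ?_)
    (fun x hx => sub_nonneg.2 (hinit x hx)) (fun t ht => sub_nonneg.2 (hleft t ht)) (fun t ht => ?_)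
    (t, x) ⟨ht, hx⟩)
  · exact (hv.differentiableAt_time t ht x hx).sub
      (H.ut_diff t (time_mem (Ioc_subset_Icc_self ht)) x (space_mem hx))
  · have ht' := time_mem (Ioc_subset_Icc_self ht)
    have hderiv : deriv (fun y => v t y - u t y) =ᶠ[𝓝 x]
        fun y => deriv (v t) y - deriv (u t) y := by
      filter_upwards [Ioo_mem_nhds hx.1 hx.2] with y hy
      exact deriv_fun_sub (hv.differentiableAt_space t ht y hy) (H.ux_diff t ht' y (space_mem hy))
    rw [hderiv.deriv_eq, deriv_fun_sub (hv.differentiableAt_deriv t ht x hx)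
      (H.uxx_diff t ht' x (space_mem hx)), deriv_fun_sub (hv.differentiableAt_time t ht x hx)
      (H.ut_diff t ht' x (space_mem hx)), H.heat t ht' x (space_mem hx)]
    linarith [hv.deriv_deriv_le t ht x hx]
  · rw [H.bc_free t (time_mem ht), sub_zero]
    exact hv.free_nonneg t ht

/-! ### Barriers -/

/-- The barrier `(k x² + T - t)^(-β)`: at `x = 0` it blows up at time `T` with rate `β`, away from
`x = 0` it stays bounded up to time `T`. -/
def blowupBarrier (k β T t x : ℝ) : ℝ := (k * x ^ 2 + T - t) ^ (-β)

section BlowupBarrier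

variable {k β T t x : ℝ}

lemma blowupBarrier_base_pos (hk : 0 ≤ k) (ht : t < T) (x : ℝ) : 0 < k * x ^ 2 + T - t := by
  linarith [mul_nonneg hk (sq_nonneg x)]

lemma hasDerivAt_blowupBarrier_base (k T t x : ℝ) :
    HasDerivAt (fun y => k * y ^ 2 + T - t) (2 * k * x) x := by
  refine ((((hasDerivAt_pow 2 x).const_mul k).add_const T).sub_const t).congr_deriv ?_
  push_cast
  ring

lemma hasDerivAt_blowupBarrier_time (hk : 0 ≤ k) (ht : t < T) :
    HasDerivAt (fun τ => blowupBarrier k β T τ x) (β * (k * x ^ 2 + T - t) ^ (-β - 1)) t := by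
  refine (((hasDerivAt_id t).const_sub (k * x ^ 2 + T)).rpow_const
    (Or.inl (blowupBarrier_base_pos hk ht x).ne')).congr_deriv ?_
  simp only [id]
  ring

lemma hasDerivAt_blowupBarrier_space (hk : 0 ≤ k) (ht : t < T) :
    HasDerivAt (blowupBarrier k β T t) (-(2 * k * β) * (x * (k * x ^ 2 + T - t) ^ (-β - 1))) x := by
  refine ((hasDerivAt_blowupBarrier_base k T t x).rpow_const
    (Or.inl (blowupBarrier_base_pos hk ht x).ne')).congr_deriv ?_
  ring

lemma hasDerivAt_deriv_blowupBarrier (hk : 0 ≤ k) (ht : t < T) :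
    HasDerivAt (deriv (blowupBarrier k β T t))
      (-(2 * k * β) * ((k * x ^ 2 + T - t) ^ (-β - 1) +
        x * (2 * k * x * (-β - 1) * (k * x ^ 2 + T - t) ^ (-β - 1 - 1)))) x := by
  have hderiv : deriv (blowupBarrier k β T t) =
      fun y => -(2 * k * β) * (y * (k * y ^ 2 + T - t) ^ (-β - 1)) :=
    funext fun _ => (hasDerivAt_blowupBarrier_space hk ht).deriv
  rw [hderiv]
  refine (((hasDerivAt_id x).mul ((hasDerivAt_blowupBarrier_base k T t x).rpow_const
    (Or.inl (blowupBarrier_base_pos hk ht x).ne'))).const_mul _).congr_deriv ?_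
  simp only [id, one_mul]

lemma deriv_deriv_blowupBarrier_le (hβ : 0 ≤ β) (hk : 0 ≤ k) (hkβ : k * (4 * β + 2) ≤ 1)
    (ht : t < T) :
    deriv (deriv (blowupBarrier k β T t)) x ≤ deriv (fun τ => blowupBarrier k β T τ x) t := by
  rw [(hasDerivAt_deriv_blowupBarrier hk ht).deriv, (hasDerivAt_blowupBarrier_time hk ht).deriv]
  have hD := blowupBarrier_base_pos hk ht x
  have hkD : k * x ^ 2 ≤ k * x ^ 2 + T - t := by linarith
  set D := k * x ^ 2 + T - t
  have hpow : D ^ (-β - 1) = D * D ^ (-β - 1 - 1) := by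
    rw [rpow_sub_one hD.ne' (-β - 1), mul_div_cancel₀ _ hD.ne']
  set E := D ^ (-β - 1 - 1)
  have : 0 < E := rpow_pos_of_pos hD _
  rw [hpow]
  calc -(2 * k * β) * (D * E + x * (2 * k * x * (-β - 1) * E))
      = β * E * (4 * k * (β + 1) * (k * x ^ 2) - 2 * k * D) := by ring
    _ ≤ β * E * (4 * k * (β + 1) * D - 2 * k * D) := by gcongr
    _ = β * (k * (4 * β + 2) * (D * E)) := by ring
    _ ≤ β * (1 * (D * E)) := by gcongr
    _ = β * (D * E) := by rw [one_mul]

lemma isSupersolution_blowupBarrier {s : ℝ → ℝ} {δ t₀ t₁ : ℝ} (hβ : 0 ≤ β) (hk : 0 ≤ k)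
    (hkβ : k * (4 * β + 2) ≤ 1) (ht₁ : t₁ < T) :
    IsSupersolution s δ t₀ t₁ (blowupBarrier k β T) where
  continuousOn := ContinuousOn.rpow_const (by fun_prop) fun q hq =>
    Or.inl (blowupBarrier_base_pos hk (hq.1.2.trans_lt ht₁) q.2).ne'
  differentiableAt_time _ ht _ _ :=
    (hasDerivAt_blowupBarrier_time hk (ht.2.trans_lt ht₁)).differentiableAt
  differentiableAt_space _ ht _ _ :=
    (hasDerivAt_blowupBarrier_space hk (ht.2.trans_lt ht₁)).differentiableAt
  differentiableAt_deriv _ ht _ _ :=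
    (hasDerivAt_deriv_blowupBarrier hk (ht.2.trans_lt ht₁)).differentiableAt
  deriv_deriv_le _ ht _ _ := deriv_deriv_blowupBarrier_le hβ hk hkβ (ht.2.trans_lt ht₁)
  free_nonneg _ ht := rpow_nonneg (blowupBarrier_base_pos hk (ht.2.trans_lt ht₁) _).le _

lemma le_mul_blowupBarrier {A B : ℝ} (hk : 0 ≤ k) (ht : t < T)
    (h : B * (k * x ^ 2 + T - t) ^ β ≤ A) : B ≤ A * blowupBarrier k β T t x := by
  have hD := blowupBarrier_base_pos hk ht x
  rwa [blowupBarrier, rpow_neg hD.le, ← div_eq_mul_inv, le_div_iff₀ (rpow_pos_of_pos hD _)]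

lemma blowupBarrier_le {δ : ℝ} (hβ : 0 ≤ β) (hk : 0 < k) (ht : t ≤ T) (hδ : 0 < δ) (hx : δ ≤ x) :
    blowupBarrier k β T t x ≤ (k * δ ^ 2) ^ (-β) := by
  refine rpow_le_rpow_of_nonpos (by positivity) ?_ (neg_nonpos.2 hβ)
  have : k * δ ^ 2 ≤ k * x ^ 2 := by gcongr
  linarith

end BlowupBarrier

namespace IsSolOn

variable {p s₀ T δ t₀ t₁ : ℝ} {φ s : ℝ → ℝ} {u : ℝ → ℝ → ℝ}

lemma isSupersolution_sub (H : IsSolOn p s₀ φ T s u) (h₀ : 0 < t₀) (h₁ : t₁ ≤ T) :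
    IsSupersolution s δ t₀ t₁ fun t x => s t - x where
  continuousOn := (H.s_cont.comp continuousOn_fst fun q hq =>
    ⟨h₀.le.trans hq.1.1, hq.1.2.trans h₁⟩).sub continuousOn_snd
  differentiableAt_time t ht _ _ := (H.s_diff t ⟨h₀.trans ht.1, ht.2.trans h₁⟩).sub_const _
  differentiableAt_space _ _ _ _ := by fun_prop
  differentiableAt_deriv _ _ _ _ := by simp
  deriv_deriv_le t ht x _ := by
    have ht' : t ∈ Ioc 0 T := ⟨h₀.trans ht.1, ht.2.trans h₁⟩
    rw [deriv_sub_const_fun, H.stefan t ht']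
    simpa using H.deriv_free_nonpos ht'
  free_nonneg t _ := (sub_self (s t)).ge

lemma exists_le_mul_sub (H : IsSolOn p s₀ φ T s u) {t : ℝ} (ht : t ∈ Ioc 0 T) :
    ∃ K ≥ 0, ∀ x ∈ Icc 0 (s t), u t x ≤ K * (s t - x) := by
  have ht' := Ioc_subset_Icc_self ht
  obtain ⟨B, hB⟩ := isCompact_Icc.bddBelow_image (H.continuousOn_deriv_slice ht)
  refine ⟨max (-B) 0, le_max_right _ _, fun x hx => ?_⟩
  have hmean := (convex_Icc 0 (s t)).mul_sub_le_image_sub_of_le_deriv (H.continuousOn_slice ht')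
    (fun y hy => (H.ux_diff t ht y (interior_Icc (α := ℝ) ▸ hy)).differentiableWithinAt)
    (fun y hy => hB (mem_image_of_mem _ (interior_subset hy))) x hx (s t)
    (right_mem_Icc.2 (H.s_pos t ht').le) hx.2
  rw [H.bc_free t ht] at hmean
  have := mul_le_mul_of_nonneg_right (le_max_left (-B) 0) (sub_nonneg.2 hx.2)
  linarith

lemma deriv_s_le (H : IsSolOn p s₀ φ T s u) {t K : ℝ} (ht : t ∈ Ioc 0 T) (hδ : 0 ≤ δ)
    (hδs : δ < s t) (hK : ∀ x ∈ Ioo δ (s t), u t x ≤ K * (s t - x)) : deriv s t ≤ K := by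
  have hlim : Tendsto (fun x => K * (-1) - deriv (u t) x) (𝓝[<] s t)
      (𝓝 (K * (-1) - deriv (u t) (s t))) := tendsto_const_nhds.sub (H.tendsto_deriv_slice ht)
  have hslope := le_zero_of_tendsto_deriv_of_le_left (f := fun x => K * (s t - x) - u t x) hδs
    (ContinuousOn.sub (by fun_prop) ((H.continuousOn_slice (Ioc_subset_Icc_self ht)).mono
      (Icc_subset_Icc hδ le_rfl)))
    (fun x hx => (((hasDerivAt_id x).const_sub (s t)).const_mul K).sub
      (H.ux_diff t ht x ⟨hδ.trans_lt hx.1, hx.2⟩).hasDerivAt) hlim fun x hx => by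
        rw [H.bc_free t ht, sub_self, mul_zero, sub_zero]
        exact sub_nonneg.2 (hK x hx)
  rw [H.stefan t ht]
  linarith

end IsSolOn

namespace IsSolBefore

variable {p s₀ T a : ℝ} {φ s : ℝ → ℝ} {u : ℝ → ℝ → ℝ}

lemma exists_le_mul_blowupBarrier (H : IsSolBefore p s₀ φ T s u) (ha : a ∈ Ioo 0 T) {k β C : ℝ}
    (hβ : 0 ≤ β) (hk : 0 ≤ k) (hkβ : k * (4 * β + 2) ≤ 1)
    (hC : ∀ t ∈ Ico a T, (T - t) ^ β * u t 0 ≤ C) :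
    ∃ A ≥ 0, ∀ t ∈ Ico a T, ∀ x ∈ Icc 0 (s t), u t x ≤ A * blowupBarrier k β T t x := by
  have Ha := H a ha.1 ha.2
  have ha_mem : a ∈ Icc 0 a := ⟨ha.1.le, le_rfl⟩
  obtain ⟨B, hB⟩ := isCompact_Icc.bddAbove_image (Ha.continuousOn_slice ha_mem)
  refine ⟨max (max C 0) (B * (k * s a ^ 2 + T - a) ^ β), by positivity, fun t ht => ?_⟩
  have hinit (x : ℝ) (hx : x ∈ Icc 0 (s a)) : u a x ≤
      max (max C 0) (B * (k * s a ^ 2 + T - a) ^ β) * blowupBarrier k β T a x := by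
    refine le_mul_blowupBarrier hk ha.2 (le_max_of_le_right ?_)
    have hD := blowupBarrier_base_pos hk ha.2 x
    have hsq : k * x ^ 2 ≤ k * s a ^ 2 := by
      have := hx.1
      have := hx.2
      gcongr
    exact mul_le_mul (hB (mem_image_of_mem _ hx)) (rpow_le_rpow hD.le (by linarith) hβ)
      (rpow_nonneg hD.le β) ((Ha.u_nonneg a ha_mem x hx).trans (hB (mem_image_of_mem _ hx)))
  refine (H t (ha.1.trans_le ht.1) ht.2).le_of_isSupersolution ha.1 le_rfl le_rfl
    ((isSupersolution_blowupBarrier hβ hk hkβ ht.2).const_mul (by positivity)) hinit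
    (fun τ hτ => ?_) t (right_mem_Icc.2 ht.1)
  have hτT := hτ.2.trans_lt ht.2
  refine le_mul_blowupBarrier hk hτT (le_max_of_le_left (le_max_of_le_left ?_))
  rw [zero_pow two_ne_zero, mul_zero, zero_add, mul_comm]
  exact hC τ ⟨hτ.1, hτT⟩

lemma exists_le_of_le (H : IsSolBefore p s₀ φ T s u) (ha : a ∈ Ioo 0 T) {β C δ : ℝ} (hβ : 0 ≤ β)
    (hC : ∀ t ∈ Ico a T, (T - t) ^ β * u t 0 ≤ C) (hδ : 0 < δ) :
    ∃ M, ∀ t ∈ Ico a T, ∀ x ∈ Icc δ (s t), u t x ≤ M := by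
  have hk : 0 < (4 * β + 2)⁻¹ := by positivity
  obtain ⟨A, hA, hle⟩ := H.exists_le_mul_blowupBarrier ha hβ hk.le
    (inv_mul_cancel₀ (by positivity)).le hC
  refine ⟨A * ((4 * β + 2)⁻¹ * δ ^ 2) ^ (-β), fun t ht x hx => ?_⟩
  calc u t x ≤ A * blowupBarrier (4 * β + 2)⁻¹ β T t x := hle t ht x ⟨hδ.le.trans hx.1, hx.2⟩
    _ ≤ A * ((4 * β + 2)⁻¹ * δ ^ 2) ^ (-β) := by
        gcongr
        exact blowupBarrier_le hβ hk ht.2.le hδ hx.1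

lemma exists_deriv_s_le (H : IsSolBefore p s₀ φ T s u) (ha : a ∈ Ioo 0 T) {M δ : ℝ}
    (hδ : δ ∈ Ioo 0 s₀) (hM : ∀ t ∈ Ico a T, u t δ ≤ M) :
    ∃ K, ∀ t ∈ Ico a T, deriv s t ≤ K := by
  obtain ⟨K, hK, hinit⟩ := (H a ha.1 ha.2).exists_le_mul_sub ⟨ha.1, le_rfl⟩
  have hgap : 0 < s₀ - δ := sub_pos.2 hδ.2
  refine ⟨max K (M / (s₀ - δ)), fun t ht => ?_⟩
  have Ht := H t (ha.1.trans_le ht.1) ht.2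
  have le_s {τ : ℝ} (hτ : τ ∈ Icc a t) : s₀ ≤ s τ := Ht.le_s ⟨ha.1.le.trans hτ.1, hτ.2⟩
  have hbarrier := Ht.le_of_isSupersolution ha.1 le_rfl hδ.1.le
    ((Ht.isSupersolution_sub ha.1 le_rfl).const_mul (hK.trans (le_max_left K (M / (s₀ - δ)))))
    (fun x hx => ?_) (fun τ hτ => ?_) t (right_mem_Icc.2 ht.1)
  · exact Ht.deriv_s_le ⟨ha.1.trans_le ht.1, le_rfl⟩ hδ.1.le
      (hδ.2.trans_le (le_s (right_mem_Icc.2 ht.1))) fun x hx => hbarrier x (Ioo_subset_Icc_self hx)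
  · exact (hinit x ⟨hδ.1.le.trans hx.1, hx.2⟩).trans
      (mul_le_mul_of_nonneg_right (le_max_left _ _) (sub_nonneg.2 hx.2))
  · calc u τ δ ≤ M := hM τ ⟨hτ.1, hτ.2.trans_lt ht.2⟩
      _ = M / (s₀ - δ) * (s₀ - δ) := (div_mul_cancel₀ _ hgap.ne').symm
      _ ≤ max K (M / (s₀ - δ)) * (s τ - δ) :=
        mul_le_mul (le_max_right _ _) (sub_le_sub_right (le_s hτ) δ) hgap.le
          (hK.trans (le_max_left _ _))

lemma exists_tendsto_s (H : IsSolBefore p s₀ φ T s u) (ha : a ∈ Ioo 0 T) {K : ℝ}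
    (hK : ∀ t ∈ Ico a T, deriv s t ≤ K) : ∃ L, Tendsto s (𝓝[<] T) (𝓝 L) := by
  have hmono : MonotoneOn s (Ioo a T) := fun t₁ h₁ t₂ h₂ h₁₂ =>
    (H t₂ (ha.1.trans h₂.1) h₂.2).monotoneOn_s ⟨(ha.1.trans h₁.1).le, h₁₂⟩
      ⟨(ha.1.trans h₂.1).le, le_rfl⟩ h₁₂
  refine ⟨_, hmono.tendsto_nhdsWithin_Ioo_left (nonempty_Ioo.2 ha.2) ⟨s a + |K| * (T - a), ?_⟩⟩
  rintro _ ⟨t, ht, rfl⟩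
  have Ht := H t (ha.1.trans ht.1) ht.2
  have hmean := (convex_Icc a t).image_sub_le_mul_sub_of_deriv_le
    (Ht.s_cont.mono (Icc_subset_Icc ha.1.le le_rfl))
    (fun τ hτ => (Ht.s_diff τ (Ioc_subset_Ioc_left ha.1.le
      (Ioo_subset_Ioc_self (interior_Icc (α := ℝ) ▸ hτ)))).differentiableWithinAt)
    (fun τ hτ => hK τ ⟨(interior_subset hτ).1, (interior_subset hτ).2.trans_lt ht.2⟩) a
    (left_mem_Icc.2 ht.1.le) t (right_mem_Icc.2 ht.1.le) ht.1.le
  have : K * (t - a) ≤ |K| * (T - a) :=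
    mul_le_mul (le_abs_self K) (by linarith [ht.2]) (by linarith [ht.1]) (abs_nonneg K)
  linarith

end IsSolBefore

theorem stmt_14_general {p s₀ T : ℝ} {φ s : ℝ → ℝ} {u : ℝ → ℝ → ℝ} (hp : 1 < p) (hT : 0 < T)
    (H : IsSolBefore p s₀ φ T s u) :
    (∃ C, ∀ t ∈ Ioo (T / 2) T, (T - t) ^ (1 / (2 * (p - 1))) * u t 0 ≤ C) ∧
    (∀ δ > 0, ∃ C, ∀ t ∈ Ioo (T / 2) T, ∀ x ∈ Ioo δ (s t), u t x ≤ C) ∧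
    ∃ L, Tendsto s (𝓝[<] T) (𝓝 L) := by
  have hhalf : T / 2 ∈ Ioo 0 T := ⟨half_pos hT, half_lt_self hT⟩
  have hs₀ := H.s₀_pos hT
  obtain ⟨C, hC⟩ := H.exists_sub_rpow_mul_le hp hhalf
  have hinterior (δ : ℝ) (hδ : 0 < δ) :=
    H.exists_le_of_le hhalf (one_div_nonneg.2 (by linarith)) hC hδ
  refine ⟨⟨C, fun t ht => hC t (Ioo_subset_Ico_self ht)⟩, fun δ hδ => ?_, ?_⟩
  · obtain ⟨M, hM⟩ := hinterior δ hδ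
    exact ⟨M, fun t ht x hx => hM t (Ioo_subset_Ico_self ht) x (Ioo_subset_Icc_self hx)⟩
  · obtain ⟨M, hM⟩ := hinterior (s₀ / 2) (half_pos hs₀)
    obtain ⟨K, hK⟩ := H.exists_deriv_s_le hhalf ⟨half_pos hs₀, half_lt_self hs₀⟩ fun t ht =>
      hM t ht _ ⟨le_rfl, (half_lt_self hs₀).le.trans
        ((H t (hhalf.1.trans_le ht.1) ht.2).le_s ⟨(hhalf.1.trans_le ht.1).le, le_rfl⟩)⟩
    exact H.exists_tendsto_s hhalf hK

/-- Proposition 3.3: blow-up rate, interior bound, and boundedness of the free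
boundary at a finite blow-up time. -/
theorem stmt_14 (p : ℝ) (hp : 1 < p) (s₀ : ℝ) (φ : ℝ → ℝ) (hW : memW s₀ φ)
    (s : ℝ → ℝ) (u : ℝ → ℝ → ℝ) (Tm : ℝ≥0∞)
    (hmax : IsMaxSol p s₀ φ Tm s u) (hfin : Tm ≠ ⊤) :
    (∃ C : ℝ, ∀ t ∈ Ioo (Tm.toReal / 2) Tm.toReal,
      (Tm.toReal - t) ^ (1 / (2 * (p - 1))) * u t 0 ≤ C) ∧
    (∀ δ ∈ Ioo 0 s₀, ∃ C : ℝ, ∀ t ∈ Ioo (Tm.toReal / 2) Tm.toReal,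
      ∀ x ∈ Ioo δ (s t), u t x ≤ C) ∧
    (∃ L : ℝ, Tendsto s (𝓝[<] Tm.toReal) (𝓝 L)) := by
  have hT := ENNReal.toReal_pos hmax.1.ne' hfin
  obtain ⟨hrate, hinterior, hlim⟩ := stmt_14_general hp hT fun T' h₀ h =>
    hmax.2.1 T' h₀ ((ENNReal.ofReal_lt_iff_lt_toReal h₀.le hfin).2 h)
  exact ⟨hrate, fun δ hδ => hinterior δ hδ.1, hlim⟩
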